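/- arXiv:math/0403092 — 5 statements merged into one kernel-verified Lean document; each statement's English description precedes it below -/
import Mathlib

section
/- For every natural number k ≥ 0, the formal power series Σ_{n≥1} (p_{n,k}/n!) q^n equals Z^{k+1}, where Z = Σ_{n≥1} (n^n/n!) q^n. -/
/-- `Z = Σ_{n≥1} (nⁿ/n!) qⁿ` as a formal power series over `ℚ`. -/
noncomputable def Zq : PowerSeries ℚ :=
  PowerSeries.mk fun n => if n = 0 then 0 else (n : ℚ) ^ n / n.factorial

open Classical in
/-- `p_{n,k} = Σ_T Σ_{(a,b)} C(l_T(a,b), k)`, summed over all Cayley trees `T` on `n`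
vertices (connected acyclic simple graphs on `{1,…,n}`) and all ordered pairs `(a,b)`
of vertices, where `l_T(a,b)` is the graph distance. -/
noncomputable def pCayley (n k : ℕ) : ℕ :=
  ∑ G ∈ Finset.univ.filter (fun G : SimpleGraph (Fin n) => G.Connected ∧ G.IsAcyclic),
    ∑ a : Fin n, ∑ b : Fin n, (G.dist a b).choose k


set_option linter.unusedSectionVars false

section
variable {V : Type*} [Fintype V] [DecidableEq V]

inductive Reach (f : V → V) (R : Finset V) : V → Prop
  | base {v} : v ∈ R → Reach f R v
  | step {v} : Reach f R (f v) → Reach f R v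

inductive AtDepth (f : V → V) (R : Finset V) (c : V) : ℕ → V → Prop
  | zero : AtDepth f R c 0 c
  | succ {l a} : a ∉ R → AtDepth f R c l (f a) → AtDepth f R c (l + 1) a

def IsForest (R : Finset V) (f : V → V) : Prop := (∀ r ∈ R, f r = r) ∧ ∀ v, Reach f R v

lemma atDepth_zero {f : V → V} {R : Finset V} {c a : V} : AtDepth f R c 0 a ↔ a = c := by
  constructor
  · intro h; cases h; rfl
  · rintro rfl; exact .zero

lemma atDepth_succ {f : V → V} {R : Finset V} {c a : V} {l : ℕ} :
    AtDepth f R c (l + 1) a ↔ a ∉ R ∧ AtDepth f R c l (f a) := by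
  constructor
  · intro h; cases h with | succ h1 h2 => exact ⟨h1, h2⟩
  · rintro ⟨h1, h2⟩; exact .succ h1 h2

lemma atDepth_iterate {f : V → V} {R : Finset V} {c : V} :
    ∀ {l : ℕ} {a : V}, AtDepth f R c l a → f^[l] a = c
  | 0, a, h => atDepth_zero.1 h
  | l + 1, a, h => by
    rw [Function.iterate_succ_apply]; exact atDepth_iterate (atDepth_succ.1 h).2

lemma atDepth_iterate_update {f : V → V} {R : Finset V} {c w : V} (hc : c ∈ R) :
    ∀ {l : ℕ} {a : V}, AtDepth (Function.update f c w) R c l a → f^[l] a = c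
  | 0, a, h => atDepth_zero.1 h
  | l + 1, a, h => by
    rw [atDepth_succ] at h
    have hne : a ≠ c := by rintro rfl; exact h.1 hc
    rw [Function.update_of_ne hne] at h
    rw [Function.iterate_succ_apply]; exact atDepth_iterate_update hc h.2

lemma atDepth_unique {f : V → V} {R : Finset V} {c d : V} (hc : c ∈ R) (hd : d ∈ R) :
    ∀ {l m : ℕ} {a : V}, AtDepth f R c l a → AtDepth f R d m a → c = d ∧ l = m
  | 0, 0, a, h, h' => by
    rw [atDepth_zero] at h h'; exact ⟨h ▸ h', rfl⟩
  | 0, m + 1, a, h, h' => by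
    rw [atDepth_zero] at h; rw [atDepth_succ] at h'; subst h; exact absurd hc h'.1
  | l + 1, 0, a, h, h' => by
    rw [atDepth_zero] at h'; rw [atDepth_succ] at h; subst h'; exact absurd hd h.1
  | l + 1, m + 1, a, h, h' => by
    rw [atDepth_succ] at h h'
    obtain ⟨h1, h2⟩ := atDepth_unique hc hd h.2 h'.2
    exact ⟨h1, by rw [h2]⟩

lemma Reach.exists_atDepth {f : V → V} {R : Finset V} {v : V} (h : Reach f R v) :
    ∃ c ∈ R, ∃ l, AtDepth f R c l v := by
  induction h with
  | @base v hv => exact ⟨v, hv, 0, .zero⟩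
  | @step v _ ih =>
    by_cases hv : v ∈ R
    · exact ⟨v, hv, 0, .zero⟩
    · obtain ⟨c, hc, l, h⟩ := ih
      exact ⟨c, hc, l + 1, .succ hv h⟩

/-- cutting at `c` -/
lemma Reach.cut {f : V → V} {R : Finset V} {c v : V} (h : Reach f R v) :
    Reach (Function.update f c c) (insert c R) v := by
  induction h with
  | base hv => exact .base (Finset.mem_insert_of_mem hv)
  | @step v _ ih =>
    by_cases hv : v = c
    · exact .base (by simp [hv])
    · exact .step (by rwa [Function.update_of_ne hv])

lemma IsForest.cut {f : V → V} {R : Finset V} {c : V} (h : IsForest R f) :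
    IsForest (insert c R) (Function.update f c c) := by
  refine ⟨fun r hr => ?_, fun v => (h.2 v).cut⟩
  by_cases hrc : r = c
  · simp [hrc]
  · rw [Function.update_of_ne hrc]
    exact h.1 r (by simpa [hrc] using hr)

/-- a vertex that reaches `R` without using the loop at `c` still does after modification at `c`. -/
lemma Reach.update_of_loop {g : V → V} {R : Finset V} {c w v : V} (hc : c ∉ R) (hg : g c = c)
    (h : Reach g R v) : v ≠ c ∧ Reach (Function.update g c w) R v := by
  induction h with
  | base hv => exact ⟨by rintro rfl; exact hc hv, .base hv⟩
  | @step v _ ih =>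
    have hv : v ≠ c := by rintro rfl; exact ih.1 hg
    exact ⟨hv, .step (by rw [Function.update_of_ne hv]; exact ih.2)⟩

lemma IsForest.attach {g : V → V} {R : Finset V} {c w : V} (hc : c ∉ R)
    (h : IsForest (insert c R) g) (hw : Reach g R w) :
    IsForest R (Function.update g c w) := by
  have hgc : g c = c := h.1 c (by simp)
  refine ⟨fun r hr => ?_, fun v => ?_⟩
  · have : r ≠ c := by rintro rfl; exact hc hr
    rw [Function.update_of_ne this]; exact h.1 r (by simp [hr])
  · have hcR : Reach (Function.update g c w) R c :=
      .step (by rw [Function.update_self]; exact (hw.update_of_loop hc hgc).2)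
    induction h.2 v with
    | @base v hv =>
      rcases Finset.mem_insert.1 hv with rfl | hv
      · exact hcR
      · exact .base hv
    | @step v _ ih =>
      by_cases hv : v = c
      · rwa [hv]
      · exact .step (by rwa [Function.update_of_ne hv])

/-- In a forest, `f c` reaches `R` avoiding `c`. -/
lemma IsForest.reach_cut {f : V → V} {R : Finset V} {c : V} (hc : c ∉ R) (h : IsForest R f) :
    Reach (Function.update f c c) R (f c) := by
  obtain ⟨d, hd, l, hl⟩ := (h.2 c).exists_atDepth
  have key : ∀ m v, m < l → AtDepth f R d m v → Reach (Function.update f c c) R v := by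
    intro m
    induction m with
    | zero => intro v _ hv; rw [atDepth_zero] at hv; subst hv; exact .base hd
    | succ m ih =>
      intro v hm hv
      have hvc : v ≠ c := by
        rintro rfl
        have := (atDepth_unique hd hd hl hv).2
        omega
      exact .step (by rw [Function.update_of_ne hvc]; exact ih _ (by omega) (atDepth_succ.1 hv).2)
  cases l with
  | zero => rw [atDepth_zero] at hl; subst hl; exact absurd hd hc
  | succ l => exact key l _ (by omega) (atDepth_succ.1 hl).2

/-- peeling the path at the root end -/
lemma AtDepth.peel {f : V → V} {R : Finset V} {u : V} (hu : u ∈ R) :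
    ∀ {l : ℕ} {a : V}, AtDepth f R u (l + 1) a →
      f^[l] a ∉ R ∧ f (f^[l] a) = u ∧
      AtDepth (Function.update f (f^[l] a) (f^[l] a)) (insert (f^[l] a) R) (f^[l] a) l a
  | 0, a, h => by
    rw [atDepth_succ, atDepth_zero] at h
    exact ⟨h.1, h.2, .zero⟩
  | l + 1, a, h => by
    rw [atDepth_succ] at h
    obtain ⟨h1, h2, h3⟩ := AtDepth.peel hu h.2
    rw [Function.iterate_succ_apply]
    refine ⟨h1, h2, ?_⟩
    have hne : a ≠ f^[l] (f a) := by
      intro he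
      rw [← he] at h2
      exact (atDepth_succ.1 h.2).1 (h2 ▸ hu)
    refine .succ (by simp [h.1, hne]) ?_
    rwa [Function.update_of_ne hne]

lemma AtDepth.unpeel {g : V → V} {R : Finset V} {c u : V} (hc : c ∉ R) :
    ∀ {l : ℕ} {a : V}, AtDepth g (insert c R) c l a →
      AtDepth (Function.update g c u) R u (l + 1) a
  | 0, a, h => by
    rw [atDepth_zero] at h; subst h
    exact .succ hc (by rw [Function.update_self]; exact .zero)
  | l + 1, a, h => by
    rw [atDepth_succ] at h
    have h1 := h.1
    simp only [Finset.mem_insert, not_or] at h1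
    exact .succ h1.2 (by rw [Function.update_of_ne h1.1]; exact AtDepth.unpeel hc h.2)

open Classical in
noncomputable def forests (R : Finset V) : Finset (V → V) := Finset.univ.filter (IsForest R)

open Classical in
noncomputable def depthPairs (R : Finset V) (c : V) (l : ℕ) : Finset ((V → V) × V) :=
  Finset.univ.filter fun p => IsForest R p.1 ∧ AtDepth p.1 R c l p.2

lemma card_depthPairs_zero (R : Finset V) (c : V) :
    (depthPairs R c 0).card = (forests R).card := by
  apply Finset.card_nbij' (fun p => p.1) (fun f => (f, c)) <;>
    simp +contextual [Set.MapsTo, Set.LeftInvOn, depthPairs, forests, atDepth_zero]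

lemma card_depthPairs_succ (R : Finset V) (u : V) (hu : u ∈ R) (l : ℕ) :
    (depthPairs R u (l + 1)).card = ∑ c ∈ Rᶜ, (depthPairs (insert c R) c l).card := by
  rw [← Finset.card_sigma]
  apply Finset.card_nbij' (fun p => ⟨p.1^[l] p.2,
    (Function.update p.1 (p.1^[l] p.2) (p.1^[l] p.2), p.2)⟩)
    (fun q => (Function.update q.2.1 q.1 u, q.2.2))
  · rintro ⟨f, a⟩ h
    simp only [depthPairs, Finset.coe_filter, Finset.mem_univ, true_and, Set.mem_ofPred_eq] at h
    obtain ⟨h1, h2, h3⟩ := h.2.peel hu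
    simp only [depthPairs, Finset.coe_sigma, Set.mem_sigma_iff, Finset.mem_coe, Finset.mem_compl,
      Finset.mem_filter, Finset.mem_univ, true_and]
    exact ⟨h1, h.1.cut, h3⟩
  · rintro ⟨c, g, a⟩ h
    simp only [depthPairs, Finset.coe_sigma, Set.mem_sigma_iff, Finset.mem_coe, Finset.mem_compl,
      Finset.mem_filter, Finset.mem_univ, true_and] at h
    simp only [depthPairs, Finset.coe_filter, Finset.mem_univ, true_and, Set.mem_ofPred_eq]
    exact ⟨h.2.1.attach h.1 (.base hu), h.2.2.unpeel h.1⟩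
  · rintro ⟨f, a⟩ h
    simp only [depthPairs, Finset.coe_filter, Finset.mem_univ, true_and, Set.mem_ofPred_eq] at h
    obtain ⟨h1, h2, h3⟩ := h.2.peel hu
    simp only [Function.update_idem, Prod.mk.injEq, and_true]
    conv_lhs => rw [← h2]
    exact Function.update_eq_self _ _
  · rintro ⟨c, g, a⟩ h
    simp only [depthPairs, Finset.coe_sigma, Set.mem_sigma_iff, Finset.mem_coe, Finset.mem_compl,
      Finset.mem_filter, Finset.mem_univ, true_and] at h
    have hgc : g c = c := h.2.1.1 c (by simp)
    have hi : (Function.update g c u)^[l] a = c := by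
      apply atDepth_iterate_update (R := insert c R) (w := c) (by simp)
      rw [Function.update_idem]
      have : Function.update g c c = g := by
        rw [Function.update_eq_self_iff]; exact hgc.symm
      rw [this]; exact h.2.2
    simp only [hi, Function.update_idem]
    have : Function.update g c c = g := by
        rw [Function.update_eq_self_iff]; exact hgc.symm
    rw [this]

open Classical in
lemma card_forests_step (R : Finset V) (v : V) (hv : v ∉ R) :
    (forests R).card = (Finset.univ.filter fun p : (V → V) × V =>
      IsForest (insert v R) p.1 ∧ Reach p.1 R p.2).card := by
  apply Finset.card_nbij' (fun f => (Function.update f v v, f v))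
    (fun p => Function.update p.1 v p.2)
  · intro f h
    simp only [forests, Finset.coe_filter, Finset.mem_univ, true_and, Set.mem_ofPred_eq] at h ⊢
    exact ⟨h.cut, h.reach_cut hv⟩
  · rintro ⟨g, w⟩ h
    simp only [forests, Finset.coe_filter, Finset.mem_univ, true_and, Set.mem_ofPred_eq] at h ⊢
    exact h.1.attach hv h.2
  · intro f h
    simp
  · rintro ⟨g, w⟩ h
    simp only [forests, Finset.coe_filter, Finset.mem_univ, true_and, Set.mem_ofPred_eq] at h ⊢
    have := h.1.1 v (by simp)
    simp only [Function.update_idem, Function.update_self, Prod.mk.injEq, and_true]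
    rw [Function.update_eq_self_iff]; exact this.symm

lemma not_reach_iff {R : Finset V} {g : V → V} {v w : V} (hv : v ∉ R)
    (hg : IsForest (insert v R) g) :
    ¬ Reach g R w ↔ ∃ l, AtDepth g (insert v R) v l w := by
  have hgv : g v = v := hg.1 v (by simp)
  constructor
  · intro h
    obtain ⟨c, hc, l, hl⟩ := (hg.2 w).exists_atDepth
    rcases Finset.mem_insert.1 hc with rfl | hc
    · exact ⟨l, hl⟩
    · exfalso
      apply h
      clear h
      induction hl with
      | zero => exact .base hc
      | succ _ _ ih => exact .step ih
  · rintro ⟨l, hl⟩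
    induction hl with
    | zero => intro h; exact (h.update_of_loop (w := v) hv hgv).1 rfl
    | @succ l a ha _ ih =>
      intro h
      cases h with
      | base h => exact ha (by simp [h])
      | step h => exact ih h

lemma card_depthPairs_eq_zero (l : ℕ) : ∀ (R : Finset V) (c : V), c ∈ R →
    Fintype.card V < R.card + l → (depthPairs R c l).card = 0 := by
  induction l with
  | zero =>
    intro R c hc h
    have := Finset.card_le_univ R
    omega
  | succ l ih =>
    intro R c hc h
    rw [card_depthPairs_succ R c hc l]
    refine Finset.sum_eq_zero fun d hd => ih _ _ (by simp) ?_
    rw [Finset.card_insert_of_notMem (by simpa using hd)]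
    omega

lemma depth_le {R : Finset V} {f : V → V} (hf : IsForest R f) {c a : V} (hc : c ∈ R) {l : ℕ}
    (h : AtDepth f R c l a) : l < Fintype.card V + 1 := by
  by_contra hl
  have h0 := card_depthPairs_eq_zero l R c hc (by
    have : 0 < R.card := Finset.card_pos.2 ⟨c, hc⟩
    omega)
  rw [Finset.card_eq_zero] at h0
  have : (f, a) ∈ depthPairs R c l := by simp [depthPairs, hf, h]
  simp [h0] at this

lemma mul_card_forests (R : Finset V) :
    Fintype.card V * (forests R).card =
      ∑ c ∈ R, ∑ l ∈ Finset.range (Fintype.card V + 1), (depthPairs R c l).card := by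
  rw [mul_comm, ← Finset.card_univ, ← Finset.card_product, ← Finset.sum_product',
    ← Finset.card_biUnion]
  · congr 1
    ext ⟨f, a⟩
    simp only [forests, depthPairs, Finset.mem_product, Finset.mem_filter, Finset.mem_univ,
      true_and, and_true, Finset.mem_biUnion, Prod.exists, Finset.mem_range]
    constructor
    · intro hf
      obtain ⟨c, hc, l, hl⟩ := (hf.2 a).exists_atDepth
      exact ⟨c, l, ⟨hc, by simpa using depth_le hf hc hl⟩, hf, hl⟩
    · rintro ⟨c, l, -, hf, -⟩; exact hf
  · rintro ⟨c, l⟩ h ⟨d, m⟩ h' hne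
    rw [Function.onFun, Finset.disjoint_left]
    rintro ⟨f, a⟩ hp hq
    simp only [depthPairs, Finset.mem_filter, Finset.mem_univ, true_and, Finset.coe_product,
      Set.mem_prod, Finset.mem_coe] at hp hq h h'
    obtain ⟨rfl, rfl⟩ := atDepth_unique h.1 h'.1 hp.2 hq.2
    exact hne rfl

lemma mul_card_forests_insert (R : Finset V) (v : V) (hv : v ∉ R) :
    Fintype.card V * (forests (insert v R)).card = (forests R).card +
      ∑ l ∈ Finset.range (Fintype.card V + 1), (depthPairs (insert v R) v l).card := by
  classical
  rw [mul_comm, ← Finset.card_univ, ← Finset.card_product, card_forests_step R v hv,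
    ← Finset.card_biUnion]
  · rw [← Finset.card_union_of_disjoint]
    · congr 1
      ext ⟨f, a⟩
      simp only [forests, depthPairs, Finset.mem_product, Finset.mem_filter, Finset.mem_univ,
        true_and, and_true, Finset.mem_biUnion, Finset.mem_range, Finset.mem_union]
      constructor
      · intro hf
        by_cases h : Reach f R a
        · exact .inl ⟨hf, h⟩
        · obtain ⟨l, hl⟩ := (not_reach_iff hv hf).1 h
          exact .inr ⟨l, by simpa using depth_le hf (by simp) hl, hf, hl⟩
      · rintro (⟨h, -⟩ | ⟨l, -, hf, -⟩)
        · exact h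
        · exact hf
    · rw [Finset.disjoint_left]
      rintro ⟨f, a⟩ hp hq
      simp only [depthPairs, Finset.mem_filter, Finset.mem_univ, true_and,
        Finset.mem_biUnion] at hp hq
      obtain ⟨l, -, hf, hl⟩ := hq
      exact (not_reach_iff hv hf).2 ⟨l, hl⟩ hp.2
  · rintro l - m - hne
    rw [Function.onFun, Finset.disjoint_left]
    rintro ⟨f, a⟩ hp hq
    simp only [depthPairs, Finset.mem_filter, Finset.mem_univ, true_and] at hp hq
    exact hne (atDepth_unique (by simp) (by simp) hp.2 hq.2).2

lemma card_depthPairs_of (φ : ℕ → ℕ) (m : ℕ)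
    (H : ∀ R : Finset V, m ≤ R.card → (forests R).card = φ R.card) (l : ℕ) :
    ∀ (R : Finset V) (c : V), c ∈ R → m ≤ R.card →
      (depthPairs R c l).card = (Fintype.card V - R.card).descFactorial l * φ (R.card + l) := by
  induction l with
  | zero => intro R c hc hm; rw [card_depthPairs_zero, H R hm]; simp
  | succ l ih =>
    intro R c hc hm
    rw [card_depthPairs_succ R c hc]
    have : ∀ d ∈ Rᶜ, (depthPairs (insert d R) d l).card =
        (Fintype.card V - (R.card + 1)).descFactorial l * φ (R.card + 1 + l) := by
      intro d hd
      have hcard : (insert d R).card = R.card + 1 :=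
        Finset.card_insert_of_notMem (by simpa using hd)
      rw [ih _ _ (by simp) (by omega), hcard]
    rw [Finset.sum_congr rfl this, Finset.sum_const, Finset.card_compl, smul_eq_mul]
    rcases Nat.eq_zero_or_pos (Fintype.card V - R.card) with h0 | h0
    · rw [h0]; simp
    · obtain ⟨N, hN⟩ : ∃ N, Fintype.card V - R.card = N + 1 := ⟨_, (Nat.succ_pred_eq_of_pos h0).symm⟩
      have : Fintype.card V - (R.card + 1) = N := by omega
      rw [this, hN, Nat.succ_descFactorial_succ, mul_assoc, add_assoc, add_comm 1 l]

/-- number of rooted forests on `n` vertices with `r` prescribed roots -/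
def phi (n r : ℕ) : ℕ := if r = n then 1 else r * n ^ (n - r - 1)

lemma mul_phi {n r : ℕ} (hr : r ≤ n) : n * phi n r = r * n ^ (n - r) := by
  unfold phi
  split_ifs with h
  · subst h; simp
  · obtain ⟨d, rfl⟩ : ∃ d, n = r + d + 1 := ⟨n - r - 1, by omega⟩
    have h1 : r + d + 1 - r - 1 = d := by omega
    have h2 : r + d + 1 - r = d + 1 := by omega
    rw [h1, h2, pow_succ]; ring

lemma card_forests_aux (d : ℕ) : ∀ R : Finset V, Fintype.card V - d ≤ R.card →
    (forests R).card = phi (Fintype.card V) R.card := by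
  induction d with
  | zero =>
    intro R hR
    have : R = Finset.univ := by
      apply Finset.eq_univ_of_card
      have := Finset.card_le_univ R
      omega
    subst this
    simp only [phi, Finset.card_univ, if_true]
    rw [Finset.card_eq_one]
    refine ⟨id, ?_⟩
    ext f
    simp only [forests, Finset.mem_filter, Finset.mem_univ, true_and, Finset.mem_singleton]
    constructor
    · intro h; funext v; exact h.1 v (by simp)
    · rintro rfl; exact ⟨fun _ _ => rfl, fun v => .base (by simp)⟩
  | succ d ih =>
    intro R hR
    by_cases hlt : Fintype.card V - d ≤ R.card
    · exact ih R hlt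
    have hex : ∃ v, v ∉ R := by
      by_contra hcon
      push Not at hcon
      have : R = Finset.univ := Finset.eq_univ_of_forall hcon
      rw [this, Finset.card_univ] at hlt
      omega
    obtain ⟨v, hv⟩ := hex
    have hcard : (insert v R).card = R.card + 1 := Finset.card_insert_of_notMem hv
    have hle : R.card + 1 ≤ Fintype.card V := hcard ▸ Finset.card_le_univ _
    have hB := fun l c hc => card_depthPairs_of _ _ ih l (insert v R) c hc (by omega)
    have e1 := mul_card_forests_insert R v hv
    have e2 := mul_card_forests (insert v R)
    rw [Finset.sum_congr rfl fun c hc => Finset.sum_congr rfl fun l _ => hB l c hc,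
      Finset.sum_const, hcard, smul_eq_mul] at e2
    rw [Finset.sum_congr rfl fun l _ => hB l v (by simp), hcard] at e1
    set S := ∑ l ∈ Finset.range (Fintype.card V + 1),
      (Fintype.card V - (R.card + 1)).descFactorial l * phi (Fintype.card V) (R.card + 1 + l)
    have e3 := ih (insert v R) (by omega)
    rw [hcard] at e3
    rw [e3, mul_phi hle] at e1 e2
    have hn : 0 < Fintype.card V := by omega
    have e4 : S = Fintype.card V ^ (Fintype.card V - (R.card + 1)) :=
      (Nat.eq_of_mul_eq_mul_left (Nat.succ_pos _) e2).symm
    rw [e4, Nat.succ_mul] at e1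
    have e5 := Nat.add_right_cancel e1
    rw [← e5, phi, if_neg (by omega), Nat.sub_sub]

lemma card_forests (R : Finset V) : (forests R).card = phi (Fintype.card V) R.card :=
  card_forests_aux (Fintype.card V) R (by omega)

lemma card_depthPairs (R : Finset V) (c : V) (hc : c ∈ R) (l : ℕ) :
    (depthPairs R c l).card =
      (Fintype.card V - R.card).descFactorial l * phi (Fintype.card V) (R.card + l) :=
  card_depthPairs_of _ 0 (fun R _ => card_forests R) l R c hc (Nat.zero_le _)

/-- the graph of a parent function -/
def parentGraph (f : V → V) : SimpleGraph V := SimpleGraph.fromRel fun x y => f x = y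

lemma parentGraph_adj {f : V → V} {x y : V} :
    (parentGraph f).Adj x y ↔ x ≠ y ∧ (f x = y ∨ f y = x) := by
  simp [parentGraph, SimpleGraph.fromRel_adj]

lemma IsForest.exists_depth {b : V} {f : V → V} (hf : IsForest {b} f) (a : V) :
    ∃ l, AtDepth f {b} b l a := by
  obtain ⟨c, hc, l, hl⟩ := (hf.2 a).exists_atDepth
  rw [Finset.mem_singleton] at hc; subst hc; exact ⟨l, hl⟩

lemma parentGraph_connected {b : V} {f : V → V} (hf : IsForest {b} f) :
    (parentGraph f).Connected := by
  have key : ∀ v, (parentGraph f).Reachable v b := by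
    intro v
    induction hf.2 v with
    | base h => rw [Finset.mem_singleton] at h; rw [h]
    | @step v _ ih =>
      by_cases h : v = f v
      · rwa [← h] at ih
      · exact (SimpleGraph.Adj.reachable (parentGraph_adj.2 ⟨h, .inl rfl⟩)).trans ih
  have : Nonempty V := ⟨b⟩
  exact ⟨fun x y => (key x).trans (key y).symm⟩

lemma parentGraph_isTree {b : V} {f : V → V} (hf : IsForest {b} f) :
    (parentGraph f).IsTree := by
  classical
  have hc := parentGraph_connected hf
  rw [SimpleGraph.isTree_iff_connected_and_card]
  refine ⟨hc, le_antisymm ?_ hc.card_vert_le_card_edgeSet_add_one⟩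
  have hfb : f b = b := hf.1 b (by simp)
  have hsub : (parentGraph f).edgeSet ⊆
      (((Finset.univ.erase b).image fun v => s(v, f v) : Finset (Sym2 V)) : Set (Sym2 V)) := by
    intro e
    induction e with
    | h x y =>
      rw [SimpleGraph.mem_edgeSet, parentGraph_adj]
      rintro ⟨hne, h | h⟩
      · simp only [Finset.coe_image, Set.mem_image, Finset.mem_coe, Finset.mem_erase,
          Finset.mem_univ, and_true]
        refine ⟨x, ?_, by rw [h]⟩
        rintro rfl; exact hne (hfb.symm.trans h)
      · simp only [Finset.coe_image, Set.mem_image, Finset.mem_coe, Finset.mem_erase,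
          Finset.mem_univ, and_true]
        refine ⟨y, ?_, by rw [h, Sym2.eq_swap]⟩
        rintro rfl; exact hne (h.symm.trans hfb)
  have h1 : Nat.card (parentGraph f).edgeSet ≤ (Finset.univ.erase b).card := by
    refine le_trans (Nat.card_mono (Finset.finite_toSet _) hsub) ?_
    rw [Nat.card_eq_card_toFinset, Finset.toFinset_coe]
    exact Finset.card_image_le
  rw [Finset.card_erase_of_mem (Finset.mem_univ b), Finset.card_univ] at h1
  have : 0 < Fintype.card V := Fintype.card_pos_iff.2 ⟨b⟩
  rw [Nat.card_eq_fintype_card (α := V)]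
  omega

lemma parentGraph_dist {b : V} {f : V → V} (hf : IsForest {b} f) :
    ∀ {l : ℕ} {a : V}, AtDepth f {b} b l a → (parentGraph f).dist a b = l := by
  have hfb : f b = b := hf.1 b (by simp)
  have hconn := parentGraph_connected hf
  have hb : b ∈ ({b} : Finset V) := by simp
  have hadj : ∀ {x y : V} {l m : ℕ}, (parentGraph f).Adj x y → AtDepth f {b} b l x →
      AtDepth f {b} b m y → l ≤ m + 1 := by
    intro x y l m h hx hy
    rw [parentGraph_adj] at h
    obtain ⟨hne, h | h⟩ := h
    · cases l with
      | zero => omega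
      | succ l =>
        have h2 := (atDepth_succ.1 hx).2
        rw [h] at h2
        have := (atDepth_unique hb hb h2 hy).2
        omega
    · cases m with
      | zero =>
        rw [atDepth_zero] at hy; subst hy
        exact absurd (h.symm.trans hfb) hne
      | succ m =>
        have h2 := (atDepth_succ.1 hy).2
        rw [h] at h2
        have := (atDepth_unique hb hb h2 hx).2
        omega
  have lower : ∀ {a c : V} (p : (parentGraph f).Walk a c) {l : ℕ}, c = b →
      AtDepth f {b} b l a → l ≤ p.length := by
    intro a c p
    induction p with
    | nil =>
      rintro l rfl hl
      exact (atDepth_unique hb hb hl .zero).2.le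
    | cons h p ih =>
      rintro l rfl hl
      obtain ⟨m, hm⟩ := hf.exists_depth _
      have h1 := ih rfl hm
      have h2 := hadj h hl hm
      simp only [SimpleGraph.Walk.length_cons]
      omega
  have upper : ∀ (l : ℕ) {a : V}, AtDepth f {b} b l a → (parentGraph f).dist a b ≤ l := by
    intro l
    induction l with
    | zero => intro a h; rw [atDepth_zero] at h; subst h; simp
    | succ l ih =>
      intro a h
      rw [atDepth_succ] at h
      have h1 := ih h.2
      have hne : a ≠ f a := by
        intro he
        have h3 := h.2
        rw [← he] at h3
        cases l with
        | zero => exact h.1 (by simp [atDepth_zero.1 h3])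
        | succ l =>
          have := (atDepth_unique hb hb h3 (atDepth_succ.2 h)).2
          omega
      have h2 : (parentGraph f).dist a (f a) = 1 :=
        SimpleGraph.dist_eq_one_iff_adj.2 (parentGraph_adj.2 ⟨hne, .inl rfl⟩)
      have := hconn.dist_triangle (u := a) (v := f a) (w := b)
      omega
  intro l a h
  refine le_antisymm (upper l h) ?_
  obtain ⟨p, hp⟩ := hconn.exists_walk_length_eq_dist a b
  rw [← hp]
  exact lower p rfl h

lemma parentGraph_injOn (b : V) : Set.InjOn parentGraph {f : V → V | IsForest {b} f} := by
  intro f hf g hg h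
  simp only [Set.mem_ofPred_eq] at hf hg
  have hb : b ∈ ({b} : Finset V) := by simp
  funext v
  by_cases hv : v = b
  · rw [hv, hf.1 b hb, hg.1 b hb]
  obtain ⟨l, hl⟩ := hf.exists_depth v
  cases l with
  | zero => exact absurd (atDepth_zero.1 hl) hv
  | succ l =>
    have h1 := parentGraph_dist hf hl
    have h2 := parentGraph_dist hf (atDepth_succ.1 hl).2
    have hne : v ≠ f v := by intro he; rw [← he] at h2; omega
    have hadj : (parentGraph f).Adj v (f v) := parentGraph_adj.2 ⟨hne, .inl rfl⟩
    rw [h] at hadj h1 h2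
    rcases (parentGraph_adj.1 hadj).2 with h3 | h3
    · exact h3.symm
    · exfalso
      obtain ⟨m, hm⟩ := hg.exists_depth (f v)
      have h4 := parentGraph_dist hg hm
      cases m with
      | zero =>
        have h5 := atDepth_zero.1 hm
        rw [h5, hg.1 b hb] at h3
        exact hv h3.symm
      | succ m =>
        have h5 := (atDepth_succ.1 hm).2
        rw [h3] at h5
        have := parentGraph_dist hg h5
        omega

lemma parentGraph_surj (b : V) (G : SimpleGraph V) (hG : G.IsTree) :
    ∃ f : V → V, IsForest {b} f ∧ parentGraph f = G := by
  classical
  have hconn := hG.1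
  have hex : ∀ v, ∃ w, (v = b → w = b) ∧ (v ≠ b → G.Adj v w ∧ G.dist w b < G.dist v b) := by
    intro v
    by_cases hv : v = b
    · exact ⟨b, by simp [hv]⟩
    · obtain ⟨p, hp⟩ := hconn.exists_walk_length_eq_dist v b
      cases p with
      | nil => exact absurd rfl hv
      | @cons _ w _ h p =>
        refine ⟨w, fun h => absurd h hv, fun _ => ⟨h, ?_⟩⟩
        have := SimpleGraph.dist_le p
        simp only [SimpleGraph.Walk.length_cons] at hp
        omega
  choose f hf1 hf2 using hex
  have hf : IsForest {b} f := by
    refine ⟨fun r hr => ?_, ?_⟩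
    · rw [Finset.mem_singleton] at hr; subst hr; exact hf1 _ rfl
    · have : ∀ n v, G.dist v b < n → Reach f {b} v := by
        intro n
        induction n with
        | zero => intro v h; omega
        | succ n ih =>
          intro v h
          by_cases hv : v = b
          · exact .base (by simp [hv])
          · exact .step (ih _ (by have := (hf2 v hv).2; omega))
      exact fun v => this _ v (Nat.lt_succ_self _)
  refine ⟨f, hf, ?_⟩
  have hle : parentGraph f ≤ G := by
    intro x y h
    rw [parentGraph_adj] at h
    obtain ⟨hne, h | h⟩ := h
    · have hx : x ≠ b := by rintro rfl; exact hne ((hf1 x rfl).symm.trans h)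
      rw [← h]; exact (hf2 x hx).1
    · have hy : y ≠ b := by rintro rfl; exact hne (h.symm.trans (hf1 y rfl))
      rw [← h]; exact (hf2 y hy).1.symm
  exact le_antisymm hle
    ((SimpleGraph.isTree_iff_minimal_connected.1 hG).2 (parentGraph_connected hf) hle)

open Classical in
lemma sum_trees_dist (b : V) (w : ℕ → ℕ) :
    ∑ G ∈ Finset.univ.filter (fun G : SimpleGraph V => G.Connected ∧ G.IsAcyclic),
      ∑ a : V, w (G.dist a b) =
    ∑ l ∈ Finset.range (Fintype.card V + 1), (depthPairs {b} b l).card * w l := by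
  have hb : b ∈ ({b} : Finset V) := by simp
  have e1 : ∑ G ∈ Finset.univ.filter (fun G : SimpleGraph V => G.Connected ∧ G.IsAcyclic),
      ∑ a : V, w (G.dist a b) =
      ∑ f ∈ forests {b}, ∑ a : V, w ((parentGraph f).dist a b) := by
    symm
    refine Finset.sum_bij (fun f _ => parentGraph f) ?_ ?_ ?_ ?_
    · intro f hf
      simp only [forests, Finset.mem_filter, Finset.mem_univ, true_and] at hf ⊢
      have := parentGraph_isTree hf
      exact ⟨this.1, this.2⟩
    · intro f hf g hg h
      simp only [forests, Finset.mem_filter, Finset.mem_univ, true_and] at hf hg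
      exact parentGraph_injOn b hf hg h
    · intro G hG
      simp only [Finset.mem_filter, Finset.mem_univ, true_and] at hG
      obtain ⟨f, hf, h⟩ := parentGraph_surj b G ⟨hG.1, hG.2⟩
      exact ⟨f, by simp [forests, hf], h⟩
    · intros; rfl
  rw [e1, ← Finset.sum_product']
  have e2 : ∀ l ∈ Finset.range (Fintype.card V + 1), (depthPairs {b} b l).card * w l =
      ∑ p ∈ (forests {b} ×ˢ (Finset.univ : Finset V)).filter
        (fun p => (parentGraph p.1).dist p.2 b = l), w ((parentGraph p.1).dist p.2 b) := by
    intro l hl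
    rw [Finset.sum_congr rfl (g := fun _ => w l)
      (fun p hp => by rw [(Finset.mem_filter.1 hp).2]), Finset.sum_const, smul_eq_mul]
    congr 2
    ext ⟨f, a⟩
    simp only [depthPairs, forests, Finset.mem_filter, Finset.mem_univ, true_and,
      Finset.mem_product, and_true]
    refine and_congr_right fun hf => ⟨fun h => parentGraph_dist hf h, fun h => ?_⟩
    obtain ⟨m, hm⟩ := hf.exists_depth a
    rw [← h, parentGraph_dist hf hm]; exact hm
  rw [Finset.sum_congr rfl e2]
  symm
  apply Finset.sum_fiberwise_of_maps_to
  rintro ⟨f, a⟩ hp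
  simp only [forests, Finset.mem_filter, Finset.mem_univ, true_and,
      Finset.mem_product, and_true] at hp
  obtain ⟨m, hm⟩ := hp.exists_depth a
  rw [parentGraph_dist hp hm, Finset.mem_range]
  exact depth_le hp hb hm

end

lemma pCayley_eq (n k : ℕ) : pCayley n k =
    n * ∑ l ∈ Finset.range (n + 1), (n - 1).descFactorial l * phi n (l + 1) * l.choose k := by
  classical
  unfold pCayley
  have : ∀ G : SimpleGraph (Fin n), ∑ a : Fin n, ∑ b : Fin n, (G.dist a b).choose k =
    ∑ b : Fin n, ∑ a : Fin n, (G.dist a b).choose k := fun G => Finset.sum_comm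
  rw [Finset.sum_congr rfl fun G _ => this G, Finset.sum_comm]
  have h2 : ∀ b : Fin n, ∑ G ∈ Finset.univ.filter
      (fun G : SimpleGraph (Fin n) => G.Connected ∧ G.IsAcyclic), ∑ a : Fin n,
      (G.dist a b).choose k =
      ∑ l ∈ Finset.range (n + 1), (n - 1).descFactorial l * phi n (l + 1) * l.choose k := by
    intro b
    rw [sum_trees_dist b (fun l => l.choose k), Fintype.card_fin]
    refine Finset.sum_congr rfl fun l _ => ?_
    rw [card_depthPairs {b} b (by simp) l]
    simp [add_comm]
  simp only [h2]
  simp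

section series
open PowerSeries Finset

lemma add_pow_div_factorial (x y : ℚ) (n : ℕ) :
    (x + y) ^ n / n.factorial =
      ∑ p ∈ antidiagonal n, (x ^ p.1 / p.1.factorial) * (y ^ p.2 / p.2.factorial) := by
  rw [(Commute.all x y).add_pow', Finset.sum_div]
  refine Finset.sum_congr rfl fun p hp => ?_
  rw [HasAntidiagonal.mem_antidiagonal] at hp
  have h : (n.choose p.1 : ℚ) = n.factorial / (p.1.factorial * p.2.factorial) := by
    rw [← hp, Nat.cast_add_choose]
  have h0 : (n.factorial : ℚ) ≠ 0 := by positivity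
  have h1 : (p.1.factorial : ℚ) ≠ 0 := by positivity
  have h2 : (p.2.factorial : ℚ) ≠ 0 := by positivity
  rw [nsmul_eq_mul, h]
  field_simp

/-- coefficients of the tree function -/
def treeCoeff (n : ℕ) : ℚ := if n = 0 then 0 else (n : ℚ) ^ (n - 1) / n.factorial

lemma tree_inner_sum (N : ℕ) :
    ∑ p ∈ antidiagonal N, treeCoeff p.1 * ((-(p.1 : ℚ)) ^ p.2 / p.2.factorial) =
      if N = 1 then 1 else 0 := by
  rcases N with _ | _ | N
  · simp [treeCoeff]
  · simp [treeCoeff, Finset.Nat.antidiagonal_succ]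
  · rw [if_neg (by omega)]
    have h := congrFun (fwdDiff_iter_pow_eq_zero_of_lt (R := ℚ)
      (show N + 1 < N + 2 by omega)) 0
    rw [fwdDiff_iter_eq_sum_shift, ← Finset.Nat.sum_antidiagonal_eq_sum_range_succ
      (fun k m => ((-1 : ℤ) ^ m * ((N + 2).choose k : ℤ)) • ((0 : ℚ) + k • (1 : ℚ)) ^ (N + 1))] at h
    have h2 : ((N + 2).factorial : ℚ) * ∑ p ∈ antidiagonal (N + 2),
        treeCoeff p.1 * ((-(p.1 : ℚ)) ^ p.2 / p.2.factorial) = 0 := by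
      rw [Finset.mul_sum]
      rw [← show _ = (0 : ℚ) from h]
      refine Finset.sum_congr rfl fun p hp => ?_
      rw [HasAntidiagonal.mem_antidiagonal] at hp
      have hc : ((N + 2).choose p.1 : ℚ) =
          (N + 2).factorial / (p.1.factorial * p.2.factorial) := by
        rw [← hp, Nat.cast_add_choose]
      simp only [zsmul_eq_mul, nsmul_eq_mul, mul_one, zero_add]
      push_cast
      rw [hc]
      obtain ⟨i, m⟩ := p
      simp only at hp hc ⊢
      rcases i with _ | i
      · simp [treeCoeff]
      · have e : N + 1 = i + m := by omega
        have h1 : ((i + 1).factorial : ℚ) ≠ 0 := by positivity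
        have h2 : (m.factorial : ℚ) ≠ 0 := by positivity
        rw [e, treeCoeff, if_neg (by omega), neg_pow, pow_add, Nat.add_sub_cancel]
        field_simp
    have h3 : ((N + 2).factorial : ℚ) ≠ 0 := by positivity
    exact (mul_eq_zero.1 h2).resolve_left h3

lemma abel_sum (n : ℕ) :
    ∑ p ∈ antidiagonal n, treeCoeff p.1 * ((p.2 : ℚ) ^ p.2 / p.2.factorial) =
      if n = 0 then 0 else (n : ℚ) ^ n / n.factorial := by
  have e1 : ∀ p ∈ antidiagonal n, treeCoeff p.1 * ((p.2 : ℚ) ^ p.2 / p.2.factorial) =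
      ∑ r ∈ antidiagonal p.2, treeCoeff p.1 *
        (((n : ℚ) ^ r.1 / r.1.factorial) * ((-(p.1 : ℚ)) ^ r.2 / r.2.factorial)) := by
    intro p hp
    rw [HasAntidiagonal.mem_antidiagonal] at hp
    rw [← Finset.mul_sum, ← add_pow_div_factorial]
    congr 3
    rw [← hp]; push_cast; ring
  have e2 : ∑ p ∈ antidiagonal n, ∑ r ∈ antidiagonal p.2, treeCoeff p.1 *
        (((n : ℚ) ^ r.1 / r.1.factorial) * ((-(p.1 : ℚ)) ^ r.2 / r.2.factorial)) =
      ∑ p ∈ antidiagonal n, ∑ r ∈ antidiagonal p.2, ((n : ℚ) ^ p.1 / p.1.factorial) *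
        (treeCoeff r.1 * ((-(r.1 : ℚ)) ^ r.2 / r.2.factorial)) := by
    rw [Finset.sum_sigma', Finset.sum_sigma']
    refine Finset.sum_nbij' (fun x => ⟨(x.2.1, x.1.1 + x.2.2), (x.1.1, x.2.2)⟩)
      (fun x => ⟨(x.2.1, x.1.1 + x.2.2), (x.1.1, x.2.2)⟩) ?_ ?_ ?_ ?_ ?_
    · rintro ⟨⟨a, b⟩, ⟨c, d⟩⟩ h
      simp only [mem_sigma, HasAntidiagonal.mem_antidiagonal] at h
      obtain ⟨h1, h2⟩ := h
      exact mem_sigma.2 ⟨HasAntidiagonal.mem_antidiagonal.2 (show c + (a + d) = n by omega),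
        HasAntidiagonal.mem_antidiagonal.2 rfl⟩
    · rintro ⟨⟨a, b⟩, ⟨c, d⟩⟩ h
      simp only [mem_sigma, HasAntidiagonal.mem_antidiagonal] at h
      obtain ⟨h1, h2⟩ := h
      exact mem_sigma.2 ⟨HasAntidiagonal.mem_antidiagonal.2 (show c + (a + d) = n by omega),
        HasAntidiagonal.mem_antidiagonal.2 rfl⟩
    · rintro ⟨⟨a, b⟩, ⟨c, d⟩⟩ h
      simp only [mem_sigma, HasAntidiagonal.mem_antidiagonal] at h
      obtain ⟨h1, rfl⟩ := h
      rfl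
    · rintro ⟨⟨a, b⟩, ⟨c, d⟩⟩ h
      simp only [mem_sigma, HasAntidiagonal.mem_antidiagonal] at h
      obtain ⟨h1, rfl⟩ := h
      rfl
    · rintro ⟨⟨a, b⟩, ⟨c, d⟩⟩ h
      ring
  rw [Finset.sum_congr rfl e1, e2]
  simp only [← Finset.mul_sum, tree_inner_sum]
  rcases n with _ | n
  · simp
  · rw [if_neg (by omega), Finset.sum_eq_single (n, 1)]
    · rw [if_pos rfl, mul_one, Nat.factorial_succ]
      push_cast
      have h2 : (n.factorial : ℚ) ≠ 0 := by positivity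
      have h3 : (n : ℚ) + 1 ≠ 0 := by positivity
      field_simp
      ring
    · rintro ⟨a, b⟩ h hne
      rw [HasAntidiagonal.mem_antidiagonal] at h
      rw [if_neg, mul_zero]
      rintro h1
      simp only at h h1
      apply hne
      rw [Prod.mk.injEq]; omega
    · intro h; exact absurd (by simp) h

/-- the tree function -/
noncomputable def Tq : PowerSeries ℚ := PowerSeries.mk treeCoeff

lemma Tq_mul : Tq * (1 + Zq) = Zq := by
  ext n
  rw [coeff_mul]
  have : ∀ m, coeff m (1 + Zq) = (m : ℚ) ^ m / m.factorial := by
    intro m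
    rcases m with _ | m
    · simp [Zq]
    · simp [Zq, coeff_one]
  simp only [this, Tq, coeff_mk]
  rw [abel_sum]
  simp [Zq]

lemma X_mul_derivative_Tq : X * d⁄dX ℚ Tq = Zq := by
  ext n
  rcases n with _ | n
  · simp [Zq]
  · rw [coeff_succ_X_mul, coeff_derivative]
    simp only [Tq, Zq, coeff_mk, treeCoeff, if_neg (Nat.succ_ne_zero n), Nat.add_sub_cancel]
    push_cast
    ring

lemma one_sub_Tq_mul : (1 - Tq) * (1 + Zq) = 1 := by
  linear_combination -Tq_mul

lemma Zq_mul : Zq * (1 - Tq) = Tq := by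
  linear_combination Tq_mul * (-1 : PowerSeries ℚ)

lemma coeff_X_mul_derivative (f : PowerSeries ℚ) (n : ℕ) :
    coeff n (X * d⁄dX ℚ f) = n * coeff n f := by
  rcases n with _ | n
  · simp
  · rw [coeff_succ_X_mul, coeff_derivative]; push_cast; ring

lemma coeff_Tq_pow_rec (l n : ℕ) :
    (n : ℚ) * coeff n (Tq ^ (l + 1)) * (l + 2) - (l + 1) * (n * coeff n (Tq ^ (l + 2))) =
      (l + 1) * (l + 2) * coeff n (Tq ^ (l + 1)) := by
  have h : C ((l : ℚ) + 2) * (X * d⁄dX ℚ (Tq ^ (l + 1))) - C ((l : ℚ) + 1) * (X * d⁄dX ℚ (Tq ^ (l + 2)))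
      = C (((l : ℚ) + 1) * (l + 2)) * Tq ^ (l + 1) := by
    have c1 : (C ((l : ℚ) + 2) : PowerSeries ℚ) = (l : PowerSeries ℚ) + 2 := by
      rw [map_add, map_natCast, map_ofNat]
    have c2 : (C ((l : ℚ) + 1) : PowerSeries ℚ) = (l : PowerSeries ℚ) + 1 := by simp
    rw [map_mul, c1, c2, derivative_pow, derivative_pow]
    have e1 : l + 1 - 1 = l := by omega
    have e2 : l + 2 - 1 = l + 1 := by omega
    rw [e1, e2]
    push_cast
    have hx := X_mul_derivative_Tq
    have hz := Zq_mul
    linear_combination ((l : PowerSeries ℚ) + 2) * (l + 1) * Tq ^ l * (1 - Tq) * hx +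
      ((l : PowerSeries ℚ) + 2) * (l + 1) * Tq ^ l * hz
  have := congrArg (coeff n) h
  simp only [map_sub, coeff_C_mul, coeff_X_mul_derivative] at this
  linear_combination this

lemma coeff_Tq_pow (l n : ℕ) : coeff n (Tq ^ (l + 1)) =
    (n * ((n - 1).descFactorial l * phi n (l + 1) : ℕ) : ℚ) / n.factorial := by
  rcases n with _ | n
  · simp [Tq, treeCoeff]
  have hf : ((n + 1).factorial : ℚ) ≠ 0 := by positivity
  have hn : ((n + 1 : ℕ) : ℚ) ≠ 0 := by positivity
  rw [eq_div_iff hf]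
  have hphi : ∀ l, (((n + 1 : ℕ) : ℚ) * ((n + 1 - 1).descFactorial l * phi (n + 1) (l + 1) : ℕ)) =
      n.descFactorial l * ((l + 1) * ((n : ℚ) + 1) ^ (n - l)) := by
    intro l
    rcases Nat.lt_or_ge n l with h | h
    · have : n.descFactorial l = 0 := Nat.descFactorial_eq_zero_iff_lt.2 h
      simp [this]
    · have := mul_phi (n := n + 1) (r := l + 1) (by omega)
      have e : n + 1 - (l + 1) = n - l := by omega
      rw [e] at this
      have h2 := congrArg (Nat.cast (R := ℚ)) this
      push_cast at h2 ⊢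
      rw [← h2]; ring
  rw [hphi]
  induction l with
  | zero =>
    rw [zero_add, pow_one, Tq, coeff_mk, treeCoeff, if_neg (by omega)]
    rw [div_mul_cancel₀ _ hf]; simp
  | succ l ih =>
    have hr := coeff_Tq_pow_rec l (n + 1)
    have hl : (l : ℚ) + 1 ≠ 0 := by positivity
    have hr2 : ((l : ℚ) + 1) * ((n + 1 : ℕ) : ℚ) * coeff (n + 1) (Tq ^ (l + 2)) =
      (l + 2) * (((n + 1 : ℕ) : ℚ) - (l + 1)) * coeff (n + 1) (Tq ^ (l + 1)) := by
      linear_combination -hr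
    apply mul_left_cancel₀ (mul_ne_zero hl hn)
    rw [← mul_assoc, show l + 1 + 1 = l + 2 from rfl, hr2, mul_assoc, ih, Nat.descFactorial_succ]
    rcases Nat.lt_or_ge n l with h | h
    · have : n.descFactorial l = 0 := Nat.descFactorial_eq_zero_iff_lt.2 h
      simp [this]
    · obtain ⟨d, rfl⟩ := Nat.exists_eq_add_of_le h
      rcases d with _ | d
      · simp
      · have h1 : l + (d + 1) - l = d + 1 := by omega
        have h2 : l + (d + 1) - (l + 1) = d := by omega
        rw [h1, h2]
        push_cast
        ring

lemma partial_sum_rec (k N : ℕ) :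
    (1 - Tq) * ∑ l ∈ range N, (l.choose (k + 1) : PowerSeries ℚ) * Tq ^ (l + 1) =
      Tq * ∑ l ∈ range N, (l.choose k : PowerSeries ℚ) * Tq ^ (l + 1) -
        (N.choose (k + 1) : PowerSeries ℚ) * Tq ^ (N + 1) := by
  induction N with
  | zero => simp
  | succ N ih =>
    rw [sum_range_succ, sum_range_succ, mul_add, ih, Nat.choose_succ_succ N k]
    push_cast
    ring

lemma partial_sum_zero (N : ℕ) :
    (1 - Tq) * ∑ l ∈ range N, (l.choose 0 : PowerSeries ℚ) * Tq ^ (l + 1) =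
      Tq - Tq ^ (N + 1) := by
  induction N with
  | zero => simp
  | succ N ih =>
    rw [sum_range_succ, mul_add, ih]
    simp only [Nat.choose_zero_right, Nat.cast_one]
    ring

lemma Zq_pow_eq (k N : ℕ) : ∃ W : PowerSeries ℚ,
    Zq ^ (k + 1) = ∑ l ∈ range N, (l.choose k : PowerSeries ℚ) * Tq ^ (l + 1) + Tq ^ N * W := by
  induction k with
  | zero =>
    refine ⟨Zq, ?_⟩
    have h := partial_sum_zero N
    set S := ∑ l ∈ range N, (l.choose 0 : PowerSeries ℚ) * Tq ^ (l + 1)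
    have h1 := one_sub_Tq_mul
    have h2 := Tq_mul
    linear_combination -(1 + Zq) * h + S * h1 - (1 - Tq ^ N) * h2
  | succ k ih =>
    obtain ⟨W, hW⟩ := ih
    have h := partial_sum_rec k N
    set S := ∑ l ∈ range N, (l.choose (k + 1) : PowerSeries ℚ) * Tq ^ (l + 1)
    set S' := ∑ l ∈ range N, (l.choose k : PowerSeries ℚ) * Tq ^ (l + 1)
    refine ⟨Zq * W + (N.choose (k + 1) : PowerSeries ℚ) * Zq, ?_⟩
    have h1 := one_sub_Tq_mul
    have h2 := Tq_mul
    rw [pow_succ, hW]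
    linear_combination -(1 + Zq) * h + S * h1 - (S' - (N.choose (k + 1) : PowerSeries ℚ) * Tq ^ N) * h2

lemma coeff_Tq_pow_mul (n : ℕ) (W : PowerSeries ℚ) : coeff n (Tq ^ (n + 1) * W) = 0 := by
  have h : (X : PowerSeries ℚ) ∣ Tq := by
    rw [X_dvd_iff]; simp [Tq, treeCoeff]
  exact X_pow_dvd_iff.1 (Dvd.dvd.mul_right (pow_dvd_pow_of_dvd h (n + 1)) W) n (Nat.lt_succ_self n)

end series

/-- For every `k ≥ 0`, `Σ_{n≥1} (p_{n,k}/n!) qⁿ = Z^{k+1}`. -/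
theorem pCayley_series_eq_Z_pow (k : ℕ) :
    (PowerSeries.mk fun n => (pCayley n k : ℚ) / n.factorial) = Zq ^ (k + 1) := by
  ext n
  obtain ⟨W, hW⟩ := Zq_pow_eq k (n + 1)
  rw [hW, map_add, coeff_Tq_pow_mul, add_zero, map_sum, PowerSeries.coeff_mk, pCayley_eq]
  push_cast
  rw [Finset.mul_sum, Finset.sum_div]
  refine Finset.sum_congr rfl fun l _ => ?_
  rw [show ((l.choose k : ℕ) : PowerSeries ℚ) = PowerSeries.C ((l.choose k : ℕ) : ℚ) by simp,
    PowerSeries.coeff_C_mul, coeff_Tq_pow]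
  push_cast
  ring
end

section
/- For every n ≥ 1, the total height of Cayley trees on n vertices equals A_n: Σ_T Σ_{(a,b)} l_T(a,b) = A_n, where T ranges over all Cayley trees on n vertices and (a,b) over all ordered pairs of vertices of T. -/
/-- `Aₙ = Σ_{p+s=n, p,s ≥ 1} (n!/(p!·s!)) pᵖ sˢ`, as a rational number. -/
noncomputable def Aseq (n : ℕ) : ℚ :=
  ∑ p ∈ Finset.Ioo 0 n,
    (n.factorial : ℚ) / (p.factorial * (n - p).factorial) * p ^ p * (n - p) ^ (n - p)

open Classical in
/-- The total height of Cayley trees on `n` vertices: `Σ_T Σ_{(a,b)} l_T(a,b)`, summed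
over all Cayley trees `T` on `n` vertices (connected acyclic simple graphs on `{1,…,n}`)
and all ordered pairs `(a,b)` of vertices, where `l_T(a,b)` is the graph distance. -/
noncomputable def totalHeight (n : ℕ) : ℕ :=
  ∑ G ∈ Finset.univ.filter (fun G : SimpleGraph (Fin n) => G.Connected ∧ G.IsAcyclic),
    ∑ a : Fin n, ∑ b : Fin n, G.dist a b


namespace CT
open Finset

theorem abel1 (n : ℕ) (hn : 1 ≤ n) : ∑ p ∈ Icc 1 n, (n.choose p : ℤ) * p^(p-1) * ((n:ℤ)-p)^(n-p) = (n:ℤ)^n := by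
  have alt : ∀ m : ℕ, 2 ≤ m → ∑ p ∈ range (m+1), (-1:ℤ)^(m-p) * m.choose p * (p:ℤ)^(m-1) = 0 := by
    intro m hm
    have h := fwdDiff_iter_eq_sum_shift (1:ℤ) (fun x : ℤ => x^(m-1)) m 0
    rw [fwdDiff_iter_pow_eq_zero_of_lt (by omega)] at h
    simpa using h.symm
  have step : ∑ p ∈ Icc 1 n, (n.choose p : ℤ) * p^(p-1) * ((n:ℤ)-p)^(n-p)
      = ∑ p ∈ Icc 1 n, ∑ j ∈ range (n+1), if p + j ≤ n then (n.choose j : ℤ) * n^j * ((-1)^(n-j-p) * (n-j).choose p * (p:ℤ)^(n-j-1)) else 0 := by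
    refine sum_congr rfl fun p hp => ?_
    obtain ⟨h1, h2⟩ := mem_Icc.1 hp
    rw [sub_eq_add_neg, add_pow, mul_sum]
    refine Eq.trans ?_ (sum_subset (s₁ := range (n-p+1)) (by intro x; simp only [mem_range]; omega) ?_)
    · refine sum_congr rfl fun j hj => ?_
      have hj : j + p ≤ n := by have := mem_range.1 hj; omega
      rw [if_pos (by omega)]
      have hc : (n.choose p : ℤ) * (n-p).choose j = n.choose j * (n-j).choose p := by
        have e1 := Nat.choose_mul (n := n) (k := p + j) (s := p) (by omega) 
        have e2 := Nat.choose_mul (n := n) (k := p + j) (s := j) (by omega) 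
        have e3 := Nat.choose_symm_add (a := p) (b := j)
        simp only [Nat.add_sub_cancel_left, Nat.add_sub_cancel] at e1 e2
        rw [e3] at e1
        exact_mod_cast (e1.symm.trans e2)
      rw [neg_pow, show n - j - p = n - p - j by omega, show n - j - 1 = (p - 1) + (n - p - j) by omega, pow_add]
      linear_combination ((p:ℤ)^(p-1) * n^j * (-1)^(n-p-j) * p^(n-p-j)) * hc
    · intro j _ hj
      rw [if_neg]; simp at hj; omega
  rw [step, sum_comm, sum_eq_single (n-1)]
  · rw [sum_eq_single 1]
    · rw [if_pos (by omega)]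
      obtain ⟨k, rfl⟩ : ∃ k, n = k + 1 := ⟨n-1, by omega⟩
      simp [pow_succ]; ring
    · intro p hp h1
      rw [if_neg]; simp at hp; omega
    · simp; omega
  · intro j hj hne
    have hj := mem_range.1 hj
    by_cases hjn : j = n
    · subst hjn
      refine sum_eq_zero fun p hp => ?_
      rw [if_neg]; simp at hp; omega
    have := alt (n-j) (by omega)
    rw [sum_range_succ', ] at this
    simp only [Nat.cast_zero] at this
    rw [zero_pow (by omega), mul_zero, add_zero] at this
    rw [← sum_filter, ← mul_sum]
    convert mul_zero _
    rw [← this]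
    refine sum_nbij' (fun p => p - 1) (fun p => p + 1) ?_ ?_ ?_ ?_ ?_
    · intro a; simp; omega
    · intro a; simp; omega
    · intro a; simp; omega
    · intro a; simp
    · intro a ha; simp at ha
      rw [show a - 1 + 1 = a by omega]
  · simp

theorem abel2 (n : ℕ) (hn : 1 ≤ n) : ∑ p ∈ Ioo 0 n, (n.choose p : ℚ) * (p:ℚ)^(p-1) * ((n-p : ℕ):ℚ)^(n-p-1) = 2 * (n-1) * (n:ℚ)^(n-2) := by
  have h1 : ∑ p ∈ Ioo 0 n, (n.choose p : ℚ) * (p:ℚ)^(p-1) * ((n-p : ℕ):ℚ)^(n-p) = (n-1) * (n:ℚ)^(n-1) := by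
    have := abel1 n hn
    have e : Icc 1 n = insert n (Ioo 0 n) := by ext x; simp; omega
    rw [e, sum_insert (by simp)] at this
    simp only [Nat.choose_self, sub_self] at this
    have h' : ∑ p ∈ Ioo 0 n, (n.choose p : ℚ) * (p:ℚ)^(p-1) * ((n-p : ℕ):ℚ)^(n-p)
        = ((∑ p ∈ Ioo 0 n, (n.choose p : ℤ) * p^(p-1) * ((n:ℤ)-p)^(n-p) : ℤ) : ℚ) := by
      push_cast
      refine sum_congr rfl fun p hp => ?_
      rw [Nat.cast_sub (mem_Ioo.1 hp).2.le]
    rw [h', eq_sub_of_add_eq' this]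
    push_cast
    obtain ⟨k, rfl⟩ : ∃ k, n = k + 1 := ⟨n-1, by omega⟩
    simp [pow_succ]; ring
  have h2 : ∑ p ∈ Ioo 0 n, (n.choose p : ℚ) * (p:ℚ)^p * ((n-p : ℕ):ℚ)^(n-p-1) = (n-1) * (n:ℚ)^(n-1) := by
    rw [← h1]
    refine sum_nbij' (fun p => n - p) (fun p => n - p) ?_ ?_ ?_ ?_ ?_
    · intro a; simp; omega
    · intro a; simp; omega
    · intro a; simp; omega
    · intro a; simp; omega
    · intro a ha; simp at ha
      rw [Nat.choose_symm (by omega), show n - (n - a) = a by omega]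
      ring
  rcases Nat.lt_or_ge n 2 with h | h
  · obtain rfl : n = 1 := by omega
    have : Ioo 0 1 = (∅ : Finset ℕ) := by decide
    simp [this]
  have hn0 : (n:ℚ) ≠ 0 := by positivity
  apply mul_left_cancel₀ hn0
  have : (n:ℚ) * (2 * (n-1) * (n:ℚ)^(n-2)) = (n-1) * (n:ℚ)^(n-1) + (n-1) * (n:ℚ)^(n-1) := by
    rw [show n - 1 = (n-2)+1 by omega, pow_succ]; ring
  rw [this]
  nth_rw 1 [← h1]
  rw [← h2, ← sum_add_distrib, mul_sum]
  refine sum_congr rfl fun p hp => ?_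
  have hp := mem_Ioo.1 hp
  obtain ⟨a, rfl⟩ : ∃ a, p = a + 1 := ⟨p-1, by omega⟩
  obtain ⟨b, rfl⟩ : ∃ b, n = a + 1 + (b + 1) := ⟨n-a-2, by omega⟩
  simp only [Nat.add_sub_cancel_left, Nat.add_sub_cancel, pow_succ]
  push_cast
  ring

variable {V : Type*}

/-- `uv` is the only edge of `G` that leaves `A`. -/
def Cross (G : SimpleGraph V) (A : Set V) (u v : V) : Prop :=
  u ∈ A ∧ v ∉ A ∧ ∀ x ∈ A, ∀ y ∉ A, G.Adj x y ↔ (x = u ∧ y = v)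

theorem Cross.compl {G : SimpleGraph V} {A : Set V} {u v : V} (h : Cross G A u v) :
    Cross G Aᶜ v u := by
  refine ⟨h.2.1, fun h' => h' h.1, fun x hx y hy => ?_⟩
  rw [G.adj_comm, h.2.2 y (by simpa using hy) x hx]; tauto

theorem Cross.adj {G : SimpleGraph V} {A : Set V} {u v : V} (h : Cross G A u v) : G.Adj u v :=
  (h.2.2 u h.1 v h.2.1).2 ⟨rfl, rfl⟩

open Classical in
noncomputable def retr (A : Set V) (u : V) (hu : u ∈ A) (x : V) : A :=
  if h : x ∈ A then ⟨x, h⟩ else ⟨u, hu⟩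

theorem retr_of_mem {A : Set V} {u : V} (hu : u ∈ A) {x : V} (h : x ∈ A) :
    retr A u hu x = ⟨x, h⟩ := by simp [retr, h]

theorem retr_of_not_mem {A : Set V} {u : V} (hu : u ∈ A) {x : V} (h : x ∉ A) :
    retr A u hu x = ⟨u, hu⟩ := by simp [retr, h]

theorem retr_adj {G : SimpleGraph V} {A : Set V} {u : V} (hu : u ∈ A)
    (h : ∀ x ∈ A, ∀ y ∉ A, G.Adj x y → x = u) {x y : V} (hxy : G.Adj x y) :
    retr A u hu x = retr A u hu y ∨ (G.induce A).Adj (retr A u hu x) (retr A u hu y) := by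
  by_cases hx : x ∈ A <;> by_cases hy : y ∈ A
  · right; rw [retr_of_mem hu hx, retr_of_mem hu hy]; simpa using hxy
  · left; rw [retr_of_mem hu hx, retr_of_not_mem hu hy]; simpa using h x hx y hy hxy
  · left; rw [retr_of_not_mem hu hx, retr_of_mem hu hy]; simpa using (h y hy x hx hxy.symm).symm
  · left; rw [retr_of_not_mem hu hx, retr_of_not_mem hu hy]

theorem retr_reach {G : SimpleGraph V} {A : Set V} {u : V} (hu : u ∈ A)
    (h : ∀ x ∈ A, ∀ y ∉ A, G.Adj x y → x = u) {x y : V} (hxy : G.Reachable x y) :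
    (G.induce A).Reachable (retr A u hu x) (retr A u hu y) := by
  obtain ⟨p⟩ := hxy
  induction p with
  | nil => rfl
  | cons hadj p ih =>
    rcases retr_adj hu h hadj with h1 | h1
    · rw [h1]; exact ih
    · exact h1.reachable.trans ih

theorem retr_reach' {G : SimpleGraph V} {A : Set V} {u : V} (hu : u ∈ A)
    (h : ∀ x ∈ A, ∀ y ∉ A, G.Adj x y → x = u) {x y : V} (hx : x ∈ A) (hy : y ∈ A)
    (hxy : G.Reachable x y) :
    (G.induce A).Reachable ⟨x, hx⟩ ⟨y, hy⟩ := by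
  simpa [retr_of_mem hu hx, retr_of_mem hu hy] using retr_reach hu h hxy

theorem retr_dist {G : SimpleGraph V} (hG : G.Connected) {A : Set V} {u : V} (hu : u ∈ A)
    (h : ∀ x ∈ A, ∀ y ∉ A, G.Adj x y → x = u) {x y : V} (p : G.Walk x y) :
    G.dist (retr A u hu x : V) (retr A u hu y) ≤ p.length := by
  induction p with
  | nil => simp
  | @cons a b c hadj p ih =>
    rw [SimpleGraph.Walk.length_cons]
    rcases retr_adj hu h hadj with h1 | h1
    · rw [h1]; omega
    · have h2 : G.Adj (retr A u hu a : V) (retr A u hu b) := h1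
      have := SimpleGraph.dist_eq_one_iff_adj.2 h2
      have := hG.dist_triangle (u := (retr A u hu a : V)) (v := retr A u hu b) (w := retr A u hu c)
      omega

theorem Cross.dist {G : SimpleGraph V} (hG : G.IsTree) {A : Set V} {u v : V}
    (h : Cross G A u v) {a : V} (ha : a ∈ A) : G.dist a v = G.dist a u + 1 := by
  have hle : G.dist a u ≤ G.dist a v := by
    obtain ⟨p, hp⟩ := hG.connected.exists_walk_length_eq_dist a v
    have := retr_dist hG.connected h.1 (fun x hx y hy hxy => ((h.2.2 x hx y hy).1 hxy).1) p
    rwa [retr_of_mem h.1 ha, retr_of_not_mem h.1 h.2.1, hp] at this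
  have := hG.dist_eq_dist_add_one_of_adj a h.adj
  omega

theorem Cross.mem_iff {G : SimpleGraph V} (hG : G.IsTree) {A : Set V} {u v : V}
    (h : Cross G A u v) {a : V} : a ∈ A ↔ G.dist a u < G.dist a v := by
  constructor
  · intro ha; have := h.dist hG ha; omega
  · intro hlt
    by_contra ha
    have := h.compl.dist hG (a := a) ha
    omega

theorem Cross.unique {G : SimpleGraph V} (hG : G.IsTree) {A B : Set V} {u v : V}
    (h : Cross G A u v) (h' : Cross G B u v) : A = B := by
  ext a; rw [h.mem_iff hG, h'.mem_iff hG]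

theorem exists_cross {G : SimpleGraph V} (hG : G.IsTree) {u v : V} (h : G.Adj u v) :
    ∃ A, Cross G A u v := by
  have hb := SimpleGraph.isAcyclic_iff_forall_adj_isBridge.1 hG.isAcyclic h
  have hb' : ¬ (G.deleteEdges {s(u,v)}).Reachable u v := hb
  refine ⟨{w | (G.deleteEdges {s(u,v)}).Reachable u w}, SimpleGraph.Reachable.refl _, hb', ?_⟩
  intro x hx y hy
  constructor
  · intro hxy
    by_cases he : s(x,y) = s(u,v)
    · rcases Sym2.eq_iff.1 he with h1 | h1
      · exact h1
      · exact absurd (h1.1 ▸ hx) hb'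
    · exact absurd (SimpleGraph.Reachable.trans hx
        (SimpleGraph.Adj.reachable (SimpleGraph.deleteEdges_adj.2 ⟨hxy, he⟩))) hy
  · rintro ⟨rfl, rfl⟩; exact h

theorem Cross.isTree_induce {G : SimpleGraph V} (hG : G.IsTree) {A : Set V} {u v : V}
    (h : Cross G A u v) : (G.induce A).IsTree := by
  have : Nonempty A := ⟨⟨u, h.1⟩⟩
  refine ⟨⟨fun x y => ?_⟩, hG.isAcyclic.induce A⟩
  exact retr_reach' h.1 (fun x hx y hy hxy => ((h.2.2 x hx y hy).1 hxy).1) x.2 y.2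
    (hG.connected x y)

theorem bridge_of_induce {G : SimpleGraph V} {A : Set V} {u v : V}
    (h : Cross G A u v) (h1 : (G.induce A).IsTree) {x y : V} (hx : x ∈ A) (hy : y ∈ A)
    (hxy : G.Adj x y) : G.IsBridge s(x, y) := by
  have hb : ¬ ((G.induce A).deleteEdges {s((⟨x,hx⟩ : A),⟨y,hy⟩)}).Reachable ⟨x,hx⟩ ⟨y,hy⟩ := 
    SimpleGraph.isAcyclic_iff_forall_adj_isBridge.1 h1.isAcyclic (v := ⟨x, hx⟩) (w := ⟨y, hy⟩) hxy
  show ¬ (G.deleteEdges {s(x,y)}).Reachable x y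
  intro hr
  apply hb
  have := retr_reach' (G := G.deleteEdges {s(x,y)}) h.1 (fun x hx y hy hxy =>
    ((h.2.2 x hx y hy).1 (SimpleGraph.deleteEdges_le _ hxy)).1) hx hy hr
  refine this.mono ?_
  intro a b hab
  simp only [SimpleGraph.comap_adj, SimpleGraph.deleteEdges_adj, Set.mem_singleton_iff,
    Function.Embedding.subtype_apply] at hab ⊢
  refine ⟨hab.1, fun he => hab.2 ?_⟩
  have := congrArg (Sym2.map Subtype.val) he
  simpa using this

theorem Cross.isTree_of {G : SimpleGraph V} {A : Set V} {u v : V}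
    (h : Cross G A u v) (h1 : (G.induce A).IsTree) (h2 : (G.induce Aᶜ).IsTree) : G.IsTree := by
  have hne : Nonempty V := ⟨u⟩
  have hu : ∀ x, G.Reachable u x := by
    intro x
    by_cases hx : x ∈ A
    · have := (h1.connected ⟨u, h.1⟩ ⟨x, hx⟩).map (SimpleGraph.Embedding.induce A).toHom
      simpa using this
    · have := (h2.connected ⟨v, h.2.1⟩ ⟨x, hx⟩).map (SimpleGraph.Embedding.induce Aᶜ).toHom
      exact h.adj.reachable.trans (by simpa using this)
  refine ⟨⟨fun x y => (hu x).symm.trans (hu y)⟩, ?_⟩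
  have key : G.IsBridge s(u, v) := by
    show ¬ (G.deleteEdges {s(u,v)}).Reachable u v
    rintro ⟨p⟩
    have : ∀ x y, (G.deleteEdges {s(u,v)}).Walk x y → x ∈ A → y ∈ A := by
      intro x y p
      induction p with
      | nil => exact id
      | @cons a b c hab p ih =>
        intro ha
        apply ih
        by_contra hb
        rw [SimpleGraph.deleteEdges_adj] at hab
        obtain ⟨rfl, rfl⟩ := (h.2.2 a ha b hb).1 hab.1
        exact hab.2 rfl
    exact h.2.1 (this _ _ p h.1)
  rw [SimpleGraph.isAcyclic_iff_forall_adj_isBridge]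
  intro x y hxy
  by_cases hx : x ∈ A <;> by_cases hy : y ∈ A
  · exact bridge_of_induce h h1 hx hy hxy
  · obtain ⟨rfl, rfl⟩ := (h.2.2 x hx y hy).1 hxy
    exact key
  · obtain ⟨rfl, rfl⟩ := (h.2.2 y hy x hx).1 hxy.symm
    rw [Sym2.eq_swap]; exact key
  · exact bridge_of_induce h.compl h2 hx hy hxy

/-- glue two graphs with an edge -/
def glue (A : Set V) (u v : V) (T₁ : SimpleGraph A) (T₂ : SimpleGraph (Aᶜ : Set V)) :
    SimpleGraph V where
  Adj x y := (∃ hx hy, T₁.Adj ⟨x, hx⟩ ⟨y, hy⟩) ∨ (∃ hx hy, T₂.Adj ⟨x, hx⟩ ⟨y, hy⟩) ∨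
    ((x ∈ A ∧ y ∉ A) ∧ x = u ∧ y = v) ∨ ((y ∈ A ∧ x ∉ A) ∧ y = u ∧ x = v)
  symm := ⟨by
    rintro x y (⟨hx, hy, h⟩ | ⟨hx, hy, h⟩ | h | h)
    · exact Or.inl ⟨hy, hx, h.symm⟩
    · exact Or.inr (Or.inl ⟨hy, hx, h.symm⟩)
    · exact Or.inr (Or.inr (Or.inr h))
    · exact Or.inr (Or.inr (Or.inl h))⟩
  loopless := ⟨by
    rintro x (⟨hx, hy, h⟩ | ⟨hx, hy, h⟩ | h | h)
    · exact h.ne rfl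
    · exact h.ne rfl
    · exact h.1.2 h.1.1
    · exact h.1.2 h.1.1⟩

theorem glue_induce (A : Set V) (u v : V) (T₁ : SimpleGraph A) (T₂ : SimpleGraph (Aᶜ : Set V)) :
    (glue A u v T₁ T₂).induce A = T₁ := by
  ext ⟨x, hx⟩ ⟨y, hy⟩
  simp [glue, hx, hy]

theorem glue_induce_compl (A : Set V) (u v : V) (T₁ : SimpleGraph A)
    (T₂ : SimpleGraph (Aᶜ : Set V)) :
    (glue A u v T₁ T₂).induce Aᶜ = T₂ := by
  ext ⟨x, hx⟩ ⟨y, hy⟩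
  have hx' : x ∉ A := hx
  have hy' : y ∉ A := hy
  simp [glue, hx', hy']

theorem glue_cross {A : Set V} {u v : V} (hu : u ∈ A) (hv : v ∉ A) (T₁ : SimpleGraph A)
    (T₂ : SimpleGraph (Aᶜ : Set V)) : Cross (glue A u v T₁ T₂) A u v := by
  refine ⟨hu, hv, fun x hx y hy => ?_⟩
  simp [glue, hx, hy]

theorem glue_eq {G : SimpleGraph V} {A : Set V} {u v : V} (h : Cross G A u v) :
    glue A u v (G.induce A) (G.induce Aᶜ) = G := by
  ext x y
  by_cases hx : x ∈ A <;> by_cases hy : y ∈ A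
  · simp [glue, hx, hy]
  · simp [glue, hx, hy, h.2.2 x hx y hy]
  · simp [glue, hx, hy, G.adj_comm x y, h.2.2 y hy x hx]
  · simp [glue, hx, hy]

/-- number of trees -/
noncomputable def nt (V : Type*) : ℕ := Nat.card {G : SimpleGraph V // G.IsTree}

def crossEquiv {A : Set V} {u v : V} (hu : u ∈ A) (hv : v ∉ A) :
    {G : SimpleGraph V // G.IsTree ∧ Cross G A u v} ≃
      {G : SimpleGraph A // G.IsTree} × {G : SimpleGraph (Aᶜ : Set V) // G.IsTree} where
  toFun G := (⟨_, G.2.2.isTree_induce G.2.1⟩, ⟨_, G.2.2.compl.isTree_induce G.2.1⟩)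
  invFun P := ⟨glue A u v P.1.1 P.2.1,
    (glue_cross hu hv _ _).isTree_of
      (by rw [glue_induce]; exact P.1.2) (by rw [glue_induce_compl]; exact P.2.2),
    glue_cross hu hv _ _⟩
  left_inv G := Subtype.ext (glue_eq G.2.2)
  right_inv P := Prod.ext (Subtype.ext (glue_induce _ _ _ _ _))
    (Subtype.ext (glue_induce_compl _ _ _ _ _))

theorem nt_congr {W : Type*} (e : V ≃ W) : nt V = nt W :=
  Nat.card_congr (Equiv.subtypeEquiv e.simpleGraph fun G =>
    (SimpleGraph.Iso.comap e.symm G).isTree_iff.symm)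

/-- number of trees on `Fin n` -/
noncomputable def t (n : ℕ) : ℕ := nt (Fin n)

theorem nt_eq [Finite V] : nt V = t (Nat.card V) := nt_congr (Finite.equivFin V)

theorem t_one : t 1 = 1 := by
  rw [t, nt, Nat.card_eq_one_iff_unique]
  refine ⟨⟨fun a b => Subtype.ext (Subsingleton.elim _ _)⟩,
    ⟨⟨⊥, SimpleGraph.IsTree.of_subsingleton⟩⟩⟩

open Classical in
/-- the triples `(A, u, v)` such that `uv` is the only edge leaving `A` -/
noncomputable def Tr [Fintype V] (G : SimpleGraph V) : Finset (Finset V × V × V) :=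
  univ.filter fun q => Cross G (q.1 : Set V) q.2.1 q.2.2

theorem mem_Tr [Fintype V] {G : SimpleGraph V} {q : Finset V × V × V} :
    q ∈ Tr G ↔ Cross G (q.1 : Set V) q.2.1 q.2.2 := by simp [Tr]

theorem exists_Tr [Fintype V] {G : SimpleGraph V} (hG : G.IsTree) {u v : V} (h : G.Adj u v) :
    ∃ A : Finset V, (A, u, v) ∈ Tr G := by
  classical
  obtain ⟨A, hA⟩ := exists_cross hG h
  exact ⟨A.toFinset, by rw [mem_Tr]; simpa using hA⟩

theorem Tr_unique [Fintype V] {G : SimpleGraph V} (hG : G.IsTree) {u v : V} {A B : Finset V}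
    (h : (A, u, v) ∈ Tr G) (h' : (B, u, v) ∈ Tr G) : A = B :=
  Finset.coe_injective (Cross.unique hG (mem_Tr.1 h) (mem_Tr.1 h'))

theorem card_Tr [Fintype V] {G : SimpleGraph V} (hG : G.IsTree) :
    #(Tr G) + 2 = 2 * Fintype.card V := by
  classical
  rw [← hG.card_edgeFinset, mul_add, G.two_mul_card_edgeFinset, mul_one]
  congr 1
  refine card_bij (fun q _ => q.2) ?_ ?_ ?_
  · intro q hq; simpa using (mem_Tr.1 hq).adj
  · rintro ⟨A, u, v⟩ h ⟨B, u', v'⟩ h' he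
    obtain ⟨rfl, rfl⟩ := Prod.mk.inj he
    rw [Tr_unique hG h h']
  · rintro ⟨u, v⟩ h
    obtain ⟨A, hA⟩ := exists_Tr hG (u := u) (v := v) (by simpa using h)
    exact ⟨_, hA, rfl⟩

theorem dist_eq_card [Fintype V] [DecidableEq V] {G : SimpleGraph V} (hG : G.IsTree) (a b : V) :
    G.dist a b = #((Tr G).filter fun q => a ∈ q.1 ∧ b ∉ q.1) := by
  induction hk : G.dist a b generalizing b with
  | zero =>
    obtain rfl := (hG.connected.dist_eq_zero_iff).1 hk
    symm
    rw [card_eq_zero, filter_eq_empty_iff]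
    tauto
  | succ k ih =>
    obtain ⟨c, hc, hcb⟩ : ∃ c, G.dist a c = k ∧ G.Adj c b := by
      obtain ⟨p, hp⟩ := hG.connected.exists_walk_length_eq_dist b a
      cases p with
      | nil => simp at hk
      | @cons _ c _ h p =>
        refine ⟨c, ?_, h.symm⟩
        rw [SimpleGraph.Walk.length_cons, G.dist_comm, hk] at hp
        have h1 := SimpleGraph.dist_le p
        rw [G.dist_comm] at h1
        have h2 := hG.connected.dist_triangle (u := a) (v := c) (w := b)
        have h3 := SimpleGraph.dist_eq_one_iff_adj.2 h.symm
        omega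
    obtain ⟨A, hA⟩ := exists_Tr hG hcb
    have hA' := mem_Tr.1 hA
    have hcA : c ∈ A := hA'.1
    have hbA : b ∉ A := hA'.2.1
    have haA : a ∈ A := (hA'.mem_iff hG).2 (show G.dist a c < G.dist a b by omega)
    rw [ih c hc]
    have : (Tr G).filter (fun q => a ∈ q.1 ∧ b ∉ q.1)
        = insert (A, c, b) ((Tr G).filter fun q => a ∈ q.1 ∧ c ∉ q.1) := by
      ext ⟨B, u, v⟩
      simp only [mem_filter, mem_insert]
      constructor
      · rintro ⟨h, haB, hbB⟩
        by_cases hcB : c ∈ B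
        · left
          obtain ⟨h1, h2⟩ := ((mem_Tr.1 h).2.2 c hcB b hbB).1 hcb
          simp only at h1 h2
          subst h1 h2
          rw [Tr_unique hG h hA]
        · right; exact ⟨h, haB, hcB⟩
      · rintro (h | ⟨h, haB, hcB⟩)
        · obtain ⟨rfl, rfl, rfl⟩ := by simpa using h
          exact ⟨hA, haA, hbA⟩
        · refine ⟨h, haB, fun hbB => ?_⟩
          obtain ⟨h1, h2⟩ := ((mem_Tr.1 h).2.2 b hbB c hcB).1 hcb.symm
          simp only at h1 h2
          subst h1 h2
          have := ((mem_Tr.1 h).mem_iff hG).1 haB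
          simp only at this
          omega
    rw [this, card_insert_of_notMem]
    simp [hcA]

theorem sum_dist [Fintype V] {G : SimpleGraph V} (hG : G.IsTree) :
    ∑ a, ∑ b, G.dist a b = ∑ q ∈ Tr G, #q.1 * (Fintype.card V - #q.1) := by
  classical
  simp_rw [dist_eq_card hG, card_filter]
  simp_rw [sum_comm (s := univ) (t := Tr G)]
  refine sum_congr rfl fun q _ => ?_
  rw [← card_compl]
  have : ∀ a b : V, (if a ∈ q.1 ∧ b ∉ q.1 then 1 else 0)
      = if a ∈ q.1 then if b ∈ q.1ᶜ then 1 else 0 else 0 := by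
    intro a b; by_cases ha : a ∈ q.1 <;> by_cases hb : b ∈ q.1 <;> simp [ha, hb]
  simp_rw [this, sum_ite_irrel, sum_ite_mem, univ_inter, sum_const]
  simp

open Classical in
theorem sum_trees [Fintype V] (w : ℕ → ℕ) :
    ∑ G ∈ univ.filter (fun G : SimpleGraph V => G.IsTree), ∑ q ∈ Tr G, w #q.1
      = ∑ m ∈ range (Fintype.card V + 1), (Fintype.card V).choose m *
        (w m * (m * (Fintype.card V - m) * (t m * t (Fintype.card V - m)))) := by
  have h := sum_powerset_apply_card (x := (univ : Finset V)) 
    (fun m => w m * (m * (Fintype.card V - m) * (t m * t (Fintype.card V - m))))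
  simp only [smul_eq_mul, card_univ] at h
  rw [← h]
  simp_rw [Tr, sum_filter]
  rw [← sum_filter, sum_comm]
  rw [Fintype.sum_prod_type, powerset_univ]
  refine sum_congr rfl fun A _ => ?_
  have key : ∀ u v : V, ∑ G ∈ univ.filter (fun G : SimpleGraph V => G.IsTree),
      (if Cross G (A : Set V) u v then w #A else 0)
      = if u ∈ A then if v ∈ Aᶜ then w #A * (t #A * t (Fintype.card V - #A)) else 0 else 0 := by
    intro u v
    by_cases hu : u ∈ A
    · by_cases hv : v ∈ A
      · rw [sum_eq_zero]
        · simp [hv]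
        · intro G _
          rw [if_neg]
          exact fun h => h.2.1 hv
      · rw [if_pos hu, if_pos (by simpa using hv), ← sum_filter, filter_filter, sum_const,
          smul_eq_mul, mul_comm]
        congr 1
        have e := Nat.card_congr (crossEquiv (A := (A : Set V)) (u := u) (v := v) hu hv)
        rw [Nat.card_prod] at e
        change _ = nt _ * nt _ at e
        rw [nt_eq, nt_eq, Nat.card_eq_fintype_card, Fintype.card_subtype] at e
        rw [e]
        congr 2
        · simp
        · rw [← card_compl, ← coe_compl]; simp only [Nat.card_eq_fintype_card, Fintype.card_coe, SetLike.coe_sort_coe]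
    · rw [sum_eq_zero]
      · simp [hu]
      · intro G _
        rw [if_neg]
        exact fun h => hu h.1
  rw [Fintype.sum_prod_type]
  simp only [key]
  simp only [sum_ite_irrel, sum_ite_mem, univ_inter, sum_const, card_compl, smul_eq_mul, mul_zero]
  ring

theorem rec_nt [Fintype V] : 2 * Fintype.card V * nt V = 2 * nt V +
    ∑ m ∈ range (Fintype.card V + 1), (Fintype.card V).choose m *
      (m * (Fintype.card V - m) * (t m * t (Fintype.card V - m))) := by
  classical
  have h := sum_trees (V := V) (fun _ => 1)
  simp only [one_mul, sum_const, smul_eq_mul, mul_one] at h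
  rw [← h]
  have ht : nt V = #(univ.filter (fun G : SimpleGraph V => G.IsTree)) := by
    rw [nt, Nat.card_eq_fintype_card, Fintype.card_subtype]
  have hs : ∀ c : ℕ, c * #(univ.filter (fun G : SimpleGraph V => G.IsTree))
      = ∑ _G ∈ univ.filter (fun G : SimpleGraph V => G.IsTree), c := by
    intro c; rw [sum_const, smul_eq_mul, mul_comm]
  rw [ht, hs, hs, ← sum_add_distrib]
  refine sum_congr rfl fun G hG => ?_
  have := card_Tr (mem_filter.1 hG).2
  omega

theorem rec_t (n : ℕ) : 2 * n * t n = 2 * t n +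
    ∑ m ∈ range (n + 1), n.choose m * (m * (n - m) * (t m * t (n - m))) := by
  have h := rec_nt (V := Fin n)
  rw [Fintype.card_fin] at h
  exact h

theorem sum_range_Ioo {M : Type*} [AddCommMonoid M] (n : ℕ) (f : ℕ → M) (h0 : f 0 = 0)
    (hn : f n = 0) : ∑ m ∈ range (n+1), f m = ∑ m ∈ Ioo 0 n, f m := by
  symm
  apply sum_subset
  · intro x; simp; omega
  · intro x hx hx'
    have : x = 0 ∨ x = n := by simp at hx hx'; omega
    rcases this with rfl | rfl <;> assumption

theorem cayley (n : ℕ) (hn : 1 ≤ n) : (n:ℚ) * t n = (n:ℚ)^(n-1) := by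
  induction n using Nat.strong_induction_on with
  | _ n ih =>
  rcases Nat.lt_or_ge n 2 with h | h
  · obtain rfl : n = 1 := by omega
    simp [t_one]
  have hr := rec_t n
  rw [sum_range_Ioo _ _ (by simp) (by simp)] at hr
  have hr' : 2 * (n:ℚ) * t n = 2 * t n + ∑ m ∈ Ioo 0 n,
      (n.choose m : ℚ) * (m * ((n - m : ℕ):ℚ) * (t m * t (n - m))) := by exact_mod_cast hr
  have ha := abel2 n hn
  have e : ∑ m ∈ Ioo 0 n, (n.choose m : ℚ) * (m * ((n - m : ℕ):ℚ) * (t m * t (n - m)))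
      = 2 * (n-1) * (n:ℚ)^(n-2) := by
    rw [← ha]
    refine sum_congr rfl fun m hm => ?_
    have hm := mem_Ioo.1 hm
    rw [← ih m hm.2 hm.1, ← ih (n-m) (by omega) (by omega)]
    ring
  rw [e] at hr'
  have hn1 : (2 * ((n:ℚ) - 1)) ≠ 0 := by
    have : (2:ℚ) ≤ n := by exact_mod_cast h
    linarith
  apply mul_left_cancel₀ hn1
  rw [show n - 1 = n - 2 + 1 by omega, pow_succ]
  linear_combination (n:ℚ) * hr'

end CT

/-- For every `n ≥ 1`, the total height of Cayley trees on `n` vertices equals `Aₙ`. -/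
theorem totalHeight_eq_Aseq (n : ℕ) (hn : 1 ≤ n) : (totalHeight n : ℚ) = Aseq n := by
  classical
  have h := CT.sum_trees (V := Fin n) (fun m => m * (n - m))
  have h1 : totalHeight n = ∑ m ∈ Finset.range (n + 1), n.choose m *
        (m * (n - m) * (m * (n - m) * (CT.t m * CT.t (n - m)))) := by
    simp only [Fintype.card_fin] at h
    rw [← h, totalHeight]
    refine Finset.sum_congr ?_ ?_
    · ext G
      simp [SimpleGraph.isTree_iff]
    · intro G hG
      rw [CT.sum_dist (Finset.mem_filter.1 hG).2, Fintype.card_fin]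
  rw [h1, CT.sum_range_Ioo _ _ (by simp) (by simp), Aseq]
  push_cast
  refine Finset.sum_congr rfl fun p hp => ?_
  have hp := Finset.mem_Ioo.1 hp
  have e1 := CT.cayley p hp.1
  have e2 := CT.cayley (n - p) (by omega)
  rw [← Nat.cast_choose ℚ hp.2.le, ← Nat.cast_sub hp.2.le]
  have f1 : (p:ℚ)^p = p * (p * CT.t p) := by
    rw [e1, ← pow_succ', Nat.sub_add_cancel hp.1]
  have f2 : ((n-p:ℕ):ℚ)^(n-p) = (n-p:ℕ) * ((n-p:ℕ) * CT.t (n-p)) := by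
    rw [e2, ← pow_succ', Nat.sub_add_cancel (by omega)]
  rw [f1, f2]
  ring
end

section
/- For every integer n ≥ 1, Σ_{(d_1,…,d_n) ∈ ℕ^n, d_1+⋯+d_n = n} [ n! − Σ_{j=2}^n (j−2)!·(n−j)!·e_j(d_1,…,d_n) ] / (d_1!·d_2!···d_n!) = A_n/n + n^{n−1}, where e_j denotes the j-th elementary symmetric polynomial in the variables d_1,…,d_n. -/
/-- The `j`-th elementary symmetric polynomial of the tuple `d = (d₁,…,dₙ)`,
as a rational number: `e_j(d) = Σ_{|t| = j} Π_{i ∈ t} dᵢ`. -/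
noncomputable def esym {n : ℕ} (j : ℕ) (d : Fin n → ℕ) : ℚ :=
  ∑ t ∈ Finset.univ.powersetCard j, ∏ i ∈ t, (d i : ℚ)


/-- The `m`-th finite difference of `x ^ m` is `m!`. -/
lemma fin_diff (m : ℕ) :
    ∑ p ∈ Finset.range (m + 1), (-1 : ℚ) ^ (m - p) * (m.choose p : ℚ) * (p : ℚ) ^ m
      = (m.factorial : ℚ) := by
  have h := congrFun (fwdDiff_iter_eq_factorial (R := ℚ) (n := m)) 0
  rw [fwdDiff_iter_eq_sum_shift] at h
  simpa [zsmul_eq_mul] using h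

lemma abel_term (n p : ℕ) (hp : p ≤ n) :
    (n.choose p : ℚ) * (p : ℚ) ^ p * ((n : ℚ) - p) ^ (n - p)
      = ∑ i ∈ Finset.range (n + 1), (n.choose i : ℚ) * (n : ℚ) ^ i *
        ((-1 : ℚ) ^ (n - i - p) * ((n - i).choose p : ℚ) * (p : ℚ) ^ (n - i)) := by
  rw [sub_eq_add_neg, add_pow, Finset.mul_sum]
  have hsub : Finset.range (n - p + 1) ⊆ Finset.range (n + 1) := by
    intro i; simp only [Finset.mem_range]; omega
  rw [← Finset.sum_subset hsub]
  · refine Finset.sum_congr rfl fun i hi => ?_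
    have hi' : i ≤ n - p := by simp only [Finset.mem_range] at hi; omega
    have hc : (n.choose p : ℚ) * ((n - p).choose i : ℚ)
        = (n.choose i : ℚ) * ((n - i).choose p : ℚ) := by
      have h1 := Nat.choose_mul (n := n) (k := p + i) (s := p) (by omega)
      have h2 := Nat.choose_mul (n := n) (k := p + i) (s := i) (by omega)
      have h3 : (p + i).choose p = (p + i).choose i := Nat.choose_symm_add
      rw [h3] at h1
      rw [Nat.add_sub_cancel_left] at h1
      rw [Nat.add_sub_cancel] at h2
      exact_mod_cast h1.symm.trans h2
    have e1 : n - p - i = n - i - p := by omega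
    have e2 : n - i = p + (n - i - p) := by omega
    have e3 : (p : ℚ) ^ (n - i) = (p : ℚ) ^ p * (p : ℚ) ^ (n - i - p) := by
      rw [← pow_add, ← e2]
    rw [e1, neg_pow, e3]
    linear_combination ((p : ℚ) ^ p * (n : ℚ) ^ i * (-1) ^ (n - i - p)
      * (p : ℚ) ^ (n - i - p)) * hc
  · intro i _ hi
    have : (n - i).choose p = 0 := by
      apply Nat.choose_eq_zero_of_lt
      have h : 0 < n - i ∨ n ≤ i := by omega
      simp only [Finset.mem_range] at *
      omega
    simp [this]

/-- Abel-type identity. -/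
lemma abel (n : ℕ) :
    ∑ p ∈ Finset.range (n + 1), (n.choose p : ℚ) * (p : ℚ) ^ p * ((n : ℚ) - p) ^ (n - p)
      = ∑ j ∈ Finset.range (n + 1), (n.descFactorial j : ℚ) * (n : ℚ) ^ (n - j) := by
  rw [Finset.sum_congr rfl fun p hp =>
    abel_term n p (by simp only [Finset.mem_range] at hp; omega)]
  rw [Finset.sum_comm]
  rw [← Finset.sum_range_reflect (fun j => (n.descFactorial j : ℚ) * (n : ℚ) ^ (n - j))]
  refine Finset.sum_congr rfl fun i hi => ?_
  have hi' : i ≤ n := by simp only [Finset.mem_range] at hi; omega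
  rw [← Finset.mul_sum]
  have hsub : Finset.range (n - i + 1) ⊆ Finset.range (n + 1) := by
    intro i; simp only [Finset.mem_range]; omega
  rw [← Finset.sum_subset hsub, fin_diff]
  · have e : n + 1 - 1 - i = n - i := by omega
    have e' : n - (n - i) = i := by omega
    rw [e, e', Nat.descFactorial_eq_factorial_mul_choose, Nat.choose_symm hi']
    push_cast
    ring
  · intro p _ hp
    have : (n - i).choose p = 0 := by
      apply Nat.choose_eq_zero_of_lt
      simp only [Finset.mem_range] at *
      omega
    simp [this]

lemma Aseq_eq (n : ℕ) (hn : 1 ≤ n) :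
    Aseq n = ∑ j ∈ Finset.Icc 1 n, (n.descFactorial j : ℚ) * (n : ℚ) ^ (n - j)
      - (n : ℚ) ^ n := by
  have h := abel n
  rw [Finset.sum_range_succ, Finset.range_eq_Ico, Finset.sum_eq_sum_Ico_succ_bot (show 0 < n by omega),
    Finset.range_eq_Ico, Finset.sum_eq_sum_Ico_succ_bot (show 0 < n + 1 by omega)] at h
  have e1 : Finset.Ico (0 + 1) n = Finset.Ioo 0 n := by ext x; simp only [Finset.mem_Ico, Finset.mem_Ioo]; omega
  have e2 : Finset.Ico (0 + 1) (n + 1) = Finset.Icc 1 n := by ext x; simp only [Finset.mem_Ico, Finset.mem_Icc]; omega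
  rw [e1, e2] at h
  have hA : Aseq n = ∑ p ∈ Finset.Ioo 0 n,
      (n.choose p : ℚ) * (p : ℚ) ^ p * ((n : ℚ) - p) ^ (n - p) := by
    unfold Aseq
    refine Finset.sum_congr rfl fun p hp => ?_
    rw [Nat.cast_choose ℚ (Finset.mem_Ioo.1 hp).2.le]
  rw [← hA] at h
  simp at h
  linarith

lemma telescope (n : ℕ) (hn : 1 ≤ n) (a : ℕ → ℚ)
    (ha : ∀ j, j < n → a (j + 1) * n = a j * ((n : ℚ) - j)) (m : ℕ) (hm : 1 ≤ m) (hmn : m ≤ n) :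
    ∑ j ∈ Finset.Icc 2 m, a j / ((j : ℚ) * ((j : ℚ) - 1))
      = a 1 - a m / m - (∑ j ∈ Finset.Icc 1 m, a j) / n + a m / n := by
  have hn0 : (n : ℚ) ≠ 0 := by positivity
  induction m, hm using Nat.le_induction with
  | base => simp
  | succ m hm ih =>
    rw [Finset.sum_Icc_succ_top (by omega), Finset.sum_Icc_succ_top (by omega), ih (by omega)]
    have h := ha m (by omega)
    have hm0 : (m : ℚ) ≠ 0 := by positivity
    have hm1 : (m : ℚ) + 1 ≠ 0 := by positivity
    have h' : a (m + 1) = a m * ((n : ℚ) - m) / n := by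
      rw [eq_div_iff hn0, h]
    rw [h']
    push_cast
    have : (m : ℚ) + 1 - 1 = m := by ring
    rw [this]
    field_simp
    ring

open PowerSeries in
lemma sum_prod (n : ℕ) (t : Finset (Fin n)) :
    ∑ d ∈ (Fintype.piFinset fun _ : Fin n => Finset.range (n + 1)).filter
        (fun d => ∑ i, d i = n),
      (∏ i ∈ t, (d i : ℚ)) / ∏ i, ((d i).factorial : ℚ)
      = (n : ℚ) ^ (n - t.card) / ((n - t.card).factorial : ℚ) := by
  classical
  have hcard : t.card ≤ n := by simpa using Finset.card_le_univ t
  let f : Fin n → PowerSeries ℚ := fun i => (if i ∈ t then X else 1) * exp ℚ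
  have hprod : ∏ i, f i = X ^ t.card * exp ℚ ^ n := by
    simp only [f, Finset.prod_mul_distrib, Finset.prod_const, Finset.card_univ, Fintype.card_fin]
    congr 1
    simp
  have hc : coeff n (∏ i, f i) = (n : ℚ) ^ (n - t.card) / ((n - t.card).factorial : ℚ) := by
    rw [hprod, coeff_X_pow_mul', if_pos hcard, exp_pow_eq_rescale_exp, coeff_rescale, coeff_exp]
    simp [div_eq_mul_inv]
  rw [← hc, coeff_prod]
  refine Finset.sum_bij' (fun d _ => Finsupp.equivFunOnFinite.symm d) (fun l _ => ⇑l)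
    ?_ ?_ ?_ ?_ ?_
  · intro d hd
    simp only [Finset.mem_filter] at hd
    simp [Finset.mem_finsuppAntidiag, hd.2]
  · intro l hl
    simp only [Finset.mem_finsuppAntidiag] at hl
    simp only [Finset.mem_filter, Fintype.mem_piFinset, Finset.mem_range]
    refine ⟨fun i => ?_, hl.1⟩
    have := Finset.single_le_sum (f := l) (fun _ _ => Nat.zero_le _) (Finset.mem_univ i)
    have h2 : ∑ x, l x = n := hl.1
    omega
  · intro d _; rfl
  · intro l _; ext; simp
  · intro d _
    have hco : ∀ (i : Fin n) (m : ℕ), coeff m (f i)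
        = (if i ∈ t then (m : ℚ) else 1) / (m.factorial : ℚ) := by
      intro i m
      by_cases hi : i ∈ t
      · cases m with
        | zero => simp [f, hi]
        | succ m =>
          simp only [f, hi, if_true, coeff_succ_X_mul, coeff_exp, Nat.factorial_succ]
          have : (m : ℚ) + 1 ≠ 0 := by positivity
          have : (m.factorial : ℚ) ≠ 0 := by positivity
          simp
          field_simp
      · simp [f, hi, coeff_exp]
    simp only [hco, Finset.prod_div_distrib]
    simp

lemma sum_esym (n j : ℕ) :
    ∑ d ∈ (Fintype.piFinset fun _ : Fin n => Finset.range (n + 1)).filter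
        (fun d => ∑ i, d i = n),
      esym j d / ∏ i, ((d i).factorial : ℚ)
      = (n.choose j : ℚ) * ((n : ℚ) ^ (n - j) / ((n - j).factorial : ℚ)) := by
  simp only [esym, Finset.sum_div]
  rw [Finset.sum_comm]
  simp only [sum_prod]
  rw [Finset.sum_congr rfl (g := fun _ => (n : ℚ) ^ (n - j) / ((n - j).factorial : ℚ))]
  · simp
  · intro t ht
    rw [(Finset.mem_powersetCard.1 ht).2]

/-- For every `n ≥ 1`,
`Σ_{(d₁,…,dₙ) ∈ ℕⁿ, Σdᵢ = n} [n! − Σ_{j=2}^n (j−2)!(n−j)!·e_j(d)] / (d₁!⋯dₙ!)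
  = Aₙ/n + n^{n−1}`. -/
theorem genus_one_sum (n : ℕ) (hn : 1 ≤ n) :
    ∑ d ∈ (Fintype.piFinset fun _ : Fin n => Finset.range (n + 1)).filter
        (fun d => ∑ i, d i = n),
      ((n.factorial : ℚ) -
          ∑ j ∈ Finset.Icc 2 n,
            ((j - 2).factorial : ℚ) * ((n - j).factorial : ℚ) * esym j d) /
        ∏ i, ((d i).factorial : ℚ)
      = Aseq n / n + (n : ℚ) ^ (n - 1) := by
  have hn0 : (n : ℚ) ≠ 0 := by positivity
  simp only [sub_div, Finset.sum_sub_distrib]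
  have h0 := sum_prod n ∅
  simp only [Finset.prod_empty, Finset.card_empty, Nat.sub_zero] at h0
  have h1 : ∑ d ∈ (Fintype.piFinset fun _ : Fin n => Finset.range (n + 1)).filter
        (fun d => ∑ i, d i = n), (n.factorial : ℚ) / ∏ i, ((d i).factorial : ℚ)
      = (n : ℚ) ^ n := by
    have : (n.factorial : ℚ) ≠ 0 := by positivity
    simp only [div_eq_mul_one_div (n.factorial : ℚ)]
    rw [← Finset.mul_sum, h0]
    field_simp
  rw [h1]
  simp only [Finset.sum_div, mul_div_assoc]
  rw [Finset.sum_comm]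
  simp only [← Finset.mul_sum, sum_esym]
  let a : ℕ → ℚ := fun j => (n.descFactorial j : ℚ) * (n : ℚ) ^ (n - j)
  have ha : ∀ j, j < n → a (j + 1) * n = a j * ((n : ℚ) - j) := by
    intro j hj
    simp only [a, Nat.descFactorial_succ]
    have e : n - j = (n - (j + 1)) + 1 := by omega
    have e2 : (n : ℚ) ^ (n - j) = (n : ℚ) ^ (n - (j + 1)) * n := by rw [e, pow_succ]
    rw [e2]
    push_cast [Nat.cast_sub hj.le]
    ring
  have ht := telescope n hn a ha n hn le_rfl
  have h2 : ∀ j ∈ Finset.Icc 2 n, ((j - 2).factorial : ℚ) * (((n - j).factorial : ℚ) *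
      ((n.choose j : ℚ) * ((n : ℚ) ^ (n - j) / ((n - j).factorial : ℚ))))
      = a j / ((j : ℚ) * ((j : ℚ) - 1)) := by
    intro j hj
    obtain ⟨hj2, _⟩ := Finset.mem_Icc.1 hj
    obtain ⟨k, rfl⟩ := Nat.exists_eq_add_of_le' hj2
    simp only [a, Nat.descFactorial_eq_factorial_mul_choose]
    have : ((n - (k + 2)).factorial : ℚ) ≠ 0 := by positivity
    have : (k : ℚ) + 1 ≠ 0 := by positivity
    have : (k : ℚ) + 2 ≠ 0 := by positivity
    have e : (k : ℚ) + 2 - 1 = k + 1 := by ring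
    simp only [Nat.add_sub_cancel, Nat.factorial_succ]
    push_cast
    rw [e]
    field_simp
    ring
  have h3 := Finset.sum_congr rfl h2
  simp only [mul_assoc] at h3 ⊢
  rw [h3, ht, Aseq_eq n hn]
  have e1 : a 1 = (n : ℚ) ^ n := by
    have e : (n : ℚ) ^ n = (n : ℚ) ^ (n - 1) * n := by rw [← pow_succ]; congr 1; omega
    simp only [a, Nat.descFactorial_one]
    rw [e]; ring
  have e2 : (n : ℚ) ^ n = (n : ℚ) ^ (n - 1) * n := by rw [← pow_succ]; congr 1; omega
  rw [e1, e2]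
  simp only [a]
  field_simp
  ring
end

section
/- Let g ≥ 2 be an integer and let B and B′ be two brackets of genus g with rational values, both satisfying the string relation and the dilaton relation. If B(m) = B′(m) for every finite multiset m of nonnegative integers all of whose elements are ≥ 2, then B = B′; that is, the values of a bracket satisfying the string and dilaton relations are completely determined by its values on multisets with all parts at least 2. -/
/-- A bracket `B` (a function from finite multisets of nonnegative integers to `ℚ`)
satisfies the string relation if
`B(m + {0}) = Σ_{d ∈ m, d ≥ 1} B(m − {d} + {d−1})`,
the sum being over the elements of `m` counted with multiplicity, omitting those
equal to `0`. -/
def StringRel (B : Multiset ℕ → ℚ) : Prop :=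
  ∀ m : Multiset ℕ,
    B (0 ::ₘ m) = (m.map fun d => if d = 0 then 0 else B ((d - 1) ::ₘ m.erase d)).sum

/-- A bracket `B` of genus `g` satisfies the dilaton relation if
`B(m + {1}) = (2g − 2 + |m|)·B(m)` for every finite multiset `m`. -/
def DilatonRel (g : ℕ) (B : Multiset ℕ → ℚ) : Prop :=
  ∀ m : Multiset ℕ, B (1 ::ₘ m) = (2 * (g : ℚ) - 2 + Multiset.card m) * B m

/-- Two genus-`g` (`g ≥ 2`) brackets satisfying the string and dilaton relations and
agreeing on all multisets whose elements are all `≥ 2` are equal: a bracket is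
determined by its values on multisets with all parts at least `2`. -/
theorem bracket_determined_by_initial_values (g : ℕ) (hg : 2 ≤ g)
    (B B' : Multiset ℕ → ℚ)
    (hstr : StringRel B) (hdil : DilatonRel g B)
    (hstr' : StringRel B') (hdil' : DilatonRel g B')
    (hinit : ∀ m : Multiset ℕ, (∀ d ∈ m, 2 ≤ d) → B m = B' m) :
    B = B' := by
  have key : ∀ n : ℕ, ∀ m : Multiset ℕ, Multiset.card m = n → B m = B' m := by
    intro n
    induction n with
    | zero =>
      intro m hm
      rw [Multiset.card_eq_zero] at hm
      subst hm
      exact hinit 0 (by simp)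
    | succ n ih =>
      intro m hm
      by_cases h0 : 0 ∈ m
      · obtain ⟨t, rfl⟩ := Multiset.exists_cons_of_mem h0
        have ht : Multiset.card t = n := by simpa using hm
        rw [hstr t, hstr' t]
        congr 1
        refine Multiset.map_congr rfl ?_
        intro d hd
        split_ifs with hd0
        · rfl
        · apply ih
          rw [← ht, ← Multiset.cons_erase hd]
          simp
      · by_cases h1 : 1 ∈ m
        · obtain ⟨t, rfl⟩ := Multiset.exists_cons_of_mem h1
          have ht : Multiset.card t = n := by simpa using hm
          rw [hdil t, hdil' t, ih t ht]
        · apply hinit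
          intro d hd
          have a : d ≠ 0 := fun h => h0 (h ▸ hd)
          have b : d ≠ 1 := fun h => h1 (h ▸ hd)
          omega
  funext m
  exact key _ m rfl
end

section
/- The formal power series Σ_{n≥1} (n^{n−3}/n!) q^n and Σ_{n≥1} (n^{n−2}/n!) q^n (the exponential generating function of Cayley trees) both lie in the algebra 𝒜. -/
/-- `Y = Σ_{n≥1} (n^{n-1}/n!) qⁿ` as a formal power series over `ℚ`. -/
noncomputable def Yq : PowerSeries ℚ :=
  PowerSeries.mk fun n => if n = 0 then 0 else (n : ℚ) ^ (n - 1) / n.factorial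

open Finset in
lemma alt_sum (m : ℕ) (hm : 2 ≤ m) :
    ∑ j ∈ Ico 1 (m+1), (-1:ℚ)^(m-j) * m.choose j * (j:ℚ)^(m-1) = 0 := by
  have h2 := congrFun (fwdDiff_iter_pow_eq_zero_of_lt (R := ℚ) (j := m-1) (n := m) (by omega)) 0
  rw [fwdDiff_iter_eq_sum_shift, Finset.range_eq_Ico,
    Finset.sum_eq_sum_Ico_succ_bot (by omega)] at h2
  have h0 : (0:ℚ)^(m-1) = 0 := zero_pow (by omega)
  simpa [h0] using h2

open Finset in
lemma abel_sum_s19 (n : ℕ) (hn : 1 ≤ n) :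
    ∑ j ∈ Ico 1 (n+1), (n.choose j : ℚ) * (j:ℚ)^(j-1) * ((n:ℚ)-j)^(n-j) = (n:ℚ)^n := by
  have h1 : ∀ j ∈ Ico 1 (n+1), (n.choose j : ℚ) * (j:ℚ)^(j-1) * ((n:ℚ)-j)^(n-j) =
      ∑ m ∈ Ico j (n+1), (n.choose m : ℚ) * (n:ℚ)^(n-m) *
        ((-1:ℚ)^(m-j) * m.choose j * (j:ℚ)^(m-1)) := by
    intro j hj
    rw [mem_Ico] at hj
    rw [sum_Ico_eq_sum_range, show n + 1 - j = n - j + 1 by omega, sub_eq_neg_add, add_pow,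
      mul_sum]
    refine sum_congr rfl fun i hi => ?_
    rw [mem_range] at hi
    have hc : ((n.choose (j+i) : ℕ):ℚ) * ((j+i).choose j : ℕ) = n.choose j * (n-j).choose i := by
      have := Nat.choose_mul (n := n) (k := j+i) (s := j) (by omega)
      rw [show j + i - j = i by omega] at this
      exact_mod_cast this
    rw [show j + i - j = i by omega, show j + i - 1 = (j - 1) + i by omega,
      show n - (j+i) = n - j - i by omega, neg_pow, pow_add]
    linear_combination (-(n:ℚ)^(n-j-i) * (-1)^i * (j:ℚ)^(j-1) * (j:ℚ)^i) * hc
  rw [sum_congr rfl h1, sum_Ico_Ico_comm]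
  simp_rw [← mul_sum]
  rw [sum_eq_single 1]
  · obtain ⟨k, rfl⟩ : ∃ k, n = k + 1 := ⟨n - 1, by omega⟩
    simp [pow_succ]
    ring
  · intro m hm h
    rw [mem_Ico] at hm
    rw [alt_sum m (by omega), mul_zero]
  · intro h
    exact absurd (mem_Ico.2 ⟨le_rfl, by omega⟩) h

lemma Y_mul : Yq * (1 + Zq) = Zq := by
  have hZ : 1 + Zq = PowerSeries.mk fun n => (n : ℚ) ^ n / n.factorial := by
    ext n
    rcases n with _ | n <;> simp [Zq, PowerSeries.coeff_one]
  rw [hZ]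
  ext n
  rw [PowerSeries.coeff_mul, Finset.Nat.sum_antidiagonal_eq_sum_range_succ_mk,
    Finset.range_eq_Ico, Finset.sum_eq_sum_Ico_succ_bot (by omega)]
  rcases Nat.eq_zero_or_pos n with rfl | hn
  · simp [Yq, Zq]
  have hn0 : n ≠ 0 := by omega
  simp only [Yq, Zq, PowerSeries.coeff_mk, if_true, zero_mul, zero_add, if_neg hn0]
  rw [← abel_sum_s19 n hn, Finset.sum_div]
  refine Finset.sum_congr rfl fun j hj => ?_
  rw [Finset.mem_Ico] at hj
  rw [if_neg (by omega), Nat.cast_choose ℚ (by omega : j ≤ n), Nat.cast_sub (by omega : j ≤ n)]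
  have := Nat.factorial_ne_zero n
  have := Nat.factorial_ne_zero j
  have := Nat.factorial_ne_zero (n-j)
  field_simp

open PowerSeries in
lemma X_dY : X * d⁄dX ℚ Yq = Zq := by
  ext n
  rcases n with _ | n
  · simp [Zq]
  · rw [coeff_succ_X_mul, coeff_derivative]
    simp [Yq, Zq, pow_succ]
    ring

open PowerSeries in
lemma eq_of_euler {f g : PowerSeries ℚ} (h0 : constantCoeff f = constantCoeff g)
    (h : X * d⁄dX ℚ f = X * d⁄dX ℚ g) : f = g :=
  derivative.ext (mul_left_cancel₀ X_ne_zero h) h0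

open PowerSeries in
lemma X_d (k : ℤ) : X * d⁄dX ℚ (PowerSeries.mk fun n =>
        if n = 0 then 0 else (n : ℚ) ^ ((n : ℤ) - (k + 1)) / n.factorial) =
    PowerSeries.mk fun n => if n = 0 then 0 else (n : ℚ) ^ ((n : ℤ) - k) / n.factorial := by
  ext n
  rcases n with _ | n
  · simp
  · rw [coeff_succ_X_mul, coeff_derivative]
    have h : ((n+1:ℕ):ℚ) ≠ 0 := by positivity
    rw [coeff_mk, coeff_mk, if_neg (by omega), if_neg (by omega),
      show (((n+1:ℕ):ℤ) - k) = ((n+1:ℕ):ℤ) - (k+1) + 1 by ring, zpow_add_one₀ h]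
    push_cast
    ring

lemma Yq_eq : (PowerSeries.mk fun n =>
    if n = 0 then 0 else (n : ℚ) ^ ((n : ℤ) - 1) / n.factorial) = Yq := by
  ext n
  rcases n with _ | n
  · simp [Yq]
  · simp only [Yq, PowerSeries.coeff_mk]
    rw [if_neg (by omega), if_neg (by omega), ← zpow_natCast]
    simp

lemma Yq_const : PowerSeries.constantCoeff Yq = 0 := by
  rw [← PowerSeries.coeff_zero_eq_constantCoeff_apply, Yq, PowerSeries.coeff_mk, if_pos rfl]

open PowerSeries in
lemma W2_eq : (PowerSeries.mk fun n =>
    if n = 0 then 0 else (n : ℚ) ^ ((n : ℤ) - 2) / n.factorial) = Yq - C (1/2) * Yq ^ 2 := by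
  apply eq_of_euler
  · rw [← coeff_zero_eq_constantCoeff_apply, coeff_mk, if_pos rfl]
    simp [Yq_const]
  · have h := X_d 1
    norm_num only at h
    rw [h, Yq_eq]
    have hc : (C (1/2) : PowerSeries ℚ) * 2 = 1 := by
      rw [← map_ofNat (C (R := ℚ)) 2, ← map_mul]; norm_num
    simp only [map_sub, Derivation.leibniz, derivative_C, derivative_pow, smul_eq_mul]
    push_cast
    linear_combination (Yq - 1) * X_dY + Y_mul + Yq * (X * d⁄dX ℚ Yq) * hc

open PowerSeries in
lemma W3_eq : (PowerSeries.mk fun n =>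
    if n = 0 then 0 else (n : ℚ) ^ ((n : ℤ) - 3) / n.factorial) =
      Yq - C (3/4) * Yq ^ 2 + C (1/6) * Yq ^ 3 := by
  apply eq_of_euler
  · rw [← coeff_zero_eq_constantCoeff_apply, coeff_mk, if_pos rfl]
    simp [Yq_const]
  · have h := X_d 2
    norm_num only at h
    rw [h, W2_eq]
    have hc : (C (3/4) : PowerSeries ℚ) = 9 * C (1/12) := by
      rw [← map_ofNat (C (R := ℚ)) 9, ← map_mul]; norm_num
    have hc2 : (C (1/6) : PowerSeries ℚ) = 2 * C (1/12) := by
      rw [← map_ofNat (C (R := ℚ)) 2, ← map_mul]; norm_num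
    have hc3 : (C (1/2) : PowerSeries ℚ) = 6 * C (1/12) := by
      rw [← map_ofNat (C (R := ℚ)) 6, ← map_mul]; norm_num
    have hc4 : 12 * (C (1/12) : PowerSeries ℚ) = 1 := by
      rw [← map_ofNat (C (R := ℚ)) 12, ← map_mul]; norm_num
    simp only [map_sub, map_add, Derivation.leibniz, derivative_C, derivative_pow, smul_eq_mul]
    push_cast
    rw [hc, hc2, hc3]
    generalize (C (1/12) : PowerSeries ℚ) = c at *
    have hD := X_dY
    have hY := Y_mul
    generalize d⁄dX ℚ Yq = D at *
    generalize Yq = y at *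
    rw [← hD] at hY
    generalize hE : (X : PowerSeries ℚ) * D = E at *
    linear_combination (-1 + 18 * c * y - 6 * c * y^2) * hE + (12*c-6*c*y) * hY + (E - y) * hc4

/-- The series `Σ_{n≥1} (n^{n-3}/n!) qⁿ` and `Σ_{n≥1} (n^{n-2}/n!) qⁿ` lie in `𝒜 = ℚ[Y,Z]`
(here `n^{n-3}` and `n^{n-2}` are rational numbers, the exponents being integers). -/
theorem series_nn3_nn2_mem_adjoin :
    (PowerSeries.mk fun n =>
        if n = 0 then 0 else (n : ℚ) ^ ((n : ℤ) - 3) / n.factorial) ∈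
      Algebra.adjoin ℚ {Yq, Zq} ∧
    (PowerSeries.mk fun n =>
        if n = 0 then 0 else (n : ℚ) ^ ((n : ℤ) - 2) / n.factorial) ∈
      Algebra.adjoin ℚ {Yq, Zq} := by
  refine ⟨?_, ?_⟩
  · rw [W3_eq]
    have hY : Yq ∈ Algebra.adjoin ℚ {Yq, Zq} := Algebra.subset_adjoin (by simp)
    have hC : ∀ r : ℚ, PowerSeries.C r ∈ Algebra.adjoin ℚ {Yq, Zq} := fun r =>
      Subalgebra.algebraMap_mem _ r
    exact add_mem (sub_mem hY (mul_mem (hC _) (pow_mem hY 2))) (mul_mem (hC _) (pow_mem hY 3))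
  · rw [W2_eq]
    have hY : Yq ∈ Algebra.adjoin ℚ {Yq, Zq} := Algebra.subset_adjoin (by simp)
    have hC : ∀ r : ℚ, PowerSeries.C r ∈ Algebra.adjoin ℚ {Yq, Zq} := fun r =>
      Subalgebra.algebraMap_mem _ r
    exact sub_mem hY (mul_mem (hC _) (pow_mem hY 2))
end
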